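/- arXiv:1810.08952 — 7 statements merged into one kernel-verified Lean document; each statement's English description precedes it below -/
import Mathlib

section
/- Let n ≥ 1, 1 ≤ p < ∞, and 0 < α < β < n. Let B := B(0, e^{-2/β}) ⊂ ℝ^n and define f : ℝ^n → ℝ by f(y) := ( χ_B(y) / ( |y|^β · |ln|y||² ) )^{1/p}. Then f ∈ S_{p,β}(ℝ^n) but f ∉ S_{p,α}(ℝ^n); in particular the inclusion S_{p,α} ⊆ S_{p,β} is proper. -/
/-!
Write `g = |f|^p`; this is a radial function `h(|y|)` with `h(s) = 1 / (s^β log² s)` for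
`0 < s < R = e^{-2/β}` and `h = 0` beyond. The radius `R` is chosen so that `h` is nonincreasing
on `(0, ∞)` (`logProfile_anti`).

*Membership in `S_{p,β}`.* Let `k(s) = h(s) / s^{n-β} = 1 / (s^n log² s)` on `(0, R)`. If
`|y| ≤ |x-y|`, the kernel satisfies `|x-y|^{β-n} ≤ |y|^{β-n}`; otherwise `h(|y|) ≤ h(|x-y|)`. Hence
`g(y) |x-y|^{β-n}` is at most `k(|y|)` in the first case and `k(|x-y|)` in the second, and
`∫_{B(x,r)} g(y) |x-y|^{β-n} dy ≤ 2 ∫_{B(0,r)} k(|y|) dy`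
uniformly in `x` (`lintegral_stummel_le`). In polar coordinates `k(|·|)` is integrable, because
`1 / (s log² s)` has the bounded primitive `-1 / log s` near `0`; so the right-hand side is finite
and tends to `0` with `r`. Local integrability of `g` follows from `g ≤ k(|·|)`, as `R < 1`.

*Failure for `S_{p,α}`.* At `x = 0` the integrand is `1 / (|y|^{n+β-α} log² |y|)`; in polar
coordinates this becomes `1 / (s^{1+(β-α)} log² s)`, which dominates a multiple of `1 / s`.
-/

open MeasureTheory Metric Filter Set ENNReal

noncomputable section

/-- Euclidean space ℝ^n. -/
abbrev Euc (n : ℕ) := EuclideanSpace ℝ (Fin n)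

/-- Stummel p-modulus with general weight Ψ:
`η_{p,Ψ}f(r) = sup_x ( ∫_{|x-y|<r} |f(y)|^p Ψ(|x-y|)/|x-y|^n dy )^{1/p}`. -/
noncomputable def stummelMod (n : ℕ) (p : ℝ) (Ψ : ℝ → ℝ) (f : Euc n → ℝ) (r : ℝ) : ℝ≥0∞ :=
  ⨆ x : Euc n,
    (∫⁻ y in ball x r,
        ENNReal.ofReal (|f y| ^ p * Ψ (dist x y) / dist x y ^ (n : ℝ))) ^ (1 / p)

/-- Stummel p-modulus with power weight Ψ(t) = t^α:
`η_{p,α}f(r) = sup_x ( ∫_{|x-y|<r} |f(y)|^p / |x-y|^{n-α} dy )^{1/p}`. -/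
noncomputable def stummelModA (n : ℕ) (p α : ℝ) (f : Euc n → ℝ) (r : ℝ) : ℝ≥0∞ :=
  ⨆ x : Euc n,
    (∫⁻ y in ball x r,
        ENNReal.ofReal (|f y| ^ p / dist x y ^ ((n : ℝ) - α))) ^ (1 / p)

/-- f ∈ L^p_loc(ℝ^n). -/
def MemLocLp (n : ℕ) (p : ℝ) (f : Euc n → ℝ) : Prop :=
  LocallyIntegrable (fun y => |f y| ^ p) volume

/-- The generalized Stummel p-class `S_{p,Ψ}`. -/
def MemStummel (n : ℕ) (p : ℝ) (Ψ : ℝ → ℝ) (f : Euc n → ℝ) : Prop :=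
  MemLocLp n p f ∧ (∀ r > 0, stummelMod n p Ψ f r < ⊤) ∧
    Tendsto (stummelMod n p Ψ f) (nhdsWithin 0 (Ioi 0)) (nhds 0)

/-- The Stummel p-class `S_{p,α}` (power weight). -/
def MemStummelA (n : ℕ) (p α : ℝ) (f : Euc n → ℝ) : Prop :=
  MemLocLp n p f ∧ (∀ r > 0, stummelModA n p α f r < ⊤) ∧
    Tendsto (stummelModA n p α f) (nhdsWithin 0 (Ioi 0)) (nhds 0)

/-- The bounded Stummel modulus class `S̃_{p,α}`. -/
def MemStummelBddA (n : ℕ) (p α : ℝ) (f : Euc n → ℝ) : Prop :=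
  MemLocLp n p f ∧ ∀ r > 0, stummelModA n p α f r < ⊤

/-- Generalized Morrey norm `‖f‖_{L^{p,Ψ}}`. -/
noncomputable def morreyNorm (n : ℕ) (p : ℝ) (Ψ : ℝ → ℝ) (f : Euc n → ℝ) : ℝ≥0∞ :=
  ⨆ (x : Euc n) (r : ℝ) (_ : 0 < r),
    (volume (ball x r))⁻¹ ^ (1 / p) * ENNReal.ofReal (Ψ r)⁻¹ *
      (∫⁻ y in ball x r, ENNReal.ofReal (|f y| ^ p)) ^ (1 / p)

/-- The generalized Morrey space `L^{p,Ψ}`. -/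
def MemMorrey (n : ℕ) (p : ℝ) (Ψ : ℝ → ℝ) (f : Euc n → ℝ) : Prop :=
  MemLocLp n p f ∧ morreyNorm n p Ψ f < ⊤

/-- Classical Morrey norm `‖f‖_{L^{p,λ}}`. -/
noncomputable def morreyNormC (n : ℕ) (p lam : ℝ) (f : Euc n → ℝ) : ℝ≥0∞ :=
  ⨆ (x : Euc n) (r : ℝ) (_ : 0 < r),
    ENNReal.ofReal (r ^ (-(lam / p))) *
      (∫⁻ y in ball x r, ENNReal.ofReal (|f y| ^ p)) ^ (1 / p)

/-- The classical Morrey space `L^{p,λ}`. -/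
def MemMorreyC (n : ℕ) (p lam : ℝ) (f : Euc n → ℝ) : Prop :=
  MemLocLp n p f ∧ morreyNormC n p lam f < ⊤

/-- Generalized weak Morrey norm `‖f‖_{wL^{p,Ψ}}`. -/
noncomputable def weakMorreyNorm (n : ℕ) (p : ℝ) (Ψ : ℝ → ℝ) (f : Euc n → ℝ) : ℝ≥0∞ :=
  ⨆ (x : Euc n) (r : ℝ) (_ : 0 < r) (t : ℝ) (_ : 0 < t),
    ENNReal.ofReal t * (volume {y ∈ ball x r | t < |f y|}) ^ (1 / p) /
      (ENNReal.ofReal (Ψ r) * (volume (ball x r)) ^ (1 / p))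

/-- The generalized weak Morrey space `wL^{p,Ψ}`. -/
def MemWeakMorrey (n : ℕ) (p : ℝ) (Ψ : ℝ → ℝ) (f : Euc n → ℝ) : Prop :=
  Measurable f ∧ weakMorreyNorm n p Ψ f < ⊤

/-- Classical weak Morrey norm `‖f‖_{wL^{p,λ}}`. -/
noncomputable def weakMorreyNormC (n : ℕ) (p lam : ℝ) (f : Euc n → ℝ) : ℝ≥0∞ :=
  ⨆ (x : Euc n) (r : ℝ) (_ : 0 < r) (t : ℝ) (_ : 0 < t),
    ENNReal.ofReal (r ^ (-(lam / p))) * ENNReal.ofReal t *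
      (volume {y ∈ ball x r | t < |f y|}) ^ (1 / p)

/-- The classical weak Morrey space `wL^{p,λ}`. -/
def MemWeakMorreyC (n : ℕ) (p lam : ℝ) (f : Euc n → ℝ) : Prop :=
  Measurable f ∧ weakMorreyNormC n p lam f < ⊤

/-- Decreasing rearrangement `f*(t) = inf{σ > 0 : |{|f| > σ}| ≤ t}`. -/
noncomputable def rearrangement (n : ℕ) (f : Euc n → ℝ) (t : ℝ) : ℝ :=
  sInf {σ : ℝ | 0 < σ ∧ volume {x : Euc n | σ < |f x|} ≤ ENNReal.ofReal t}

/-- Lorentz norm `‖f‖_{L^p_κ} = ( ∫₀^∞ (t^{1/κ} f*(t))^p dt/t )^{1/p}`. -/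
noncomputable def lorentzNorm (n : ℕ) (kappa p : ℝ) (f : Euc n → ℝ) : ℝ≥0∞ :=
  (∫⁻ t in Ioi (0 : ℝ),
      ENNReal.ofReal ((t ^ (1 / kappa) * rearrangement n f t) ^ p / t)) ^ (1 / p)

/-- The Lorentz space `L^p_κ`. -/
def MemLorentz (n : ℕ) (kappa p : ℝ) (f : Euc n → ℝ) : Prop :=
  Measurable f ∧ lorentzNorm n kappa p f < ⊤

end

/-! ### Radial profiles -/

/-- The radial profile `s ↦ χ_{s < e^{-2/β}} / (s^a |log s|²)`. Its value at `s = 0` is `0`. -/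
noncomputable def logProfile (β a s : ℝ) : ℝ :=
  (Iio (Real.exp (-2 / β))).indicator (fun s => 1 / (s ^ a * |Real.log s| ^ 2)) s

lemma logProfile_of_lt {β a s : ℝ} (h : s < Real.exp (-2 / β)) :
    logProfile β a s = 1 / (s ^ a * |Real.log s| ^ 2) := by
  simp [logProfile, h]

lemma logProfile_of_le {β a s : ℝ} (h : Real.exp (-2 / β) ≤ s) : logProfile β a s = 0 := by
  simp [logProfile, h]

lemma logProfile_zero (β a : ℝ) : logProfile β a 0 = 0 := by
  simp [logProfile]

lemma logProfile_nonneg (β a : ℝ) {s : ℝ} (hs : 0 ≤ s) : 0 ≤ logProfile β a s := by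
  rcases lt_or_ge s (Real.exp (-2 / β)) with h | h
  · rw [logProfile_of_lt h]
    positivity
  · rw [logProfile_of_le h]

lemma measurable_logProfile (β a : ℝ) : Measurable (logProfile β a) := by
  unfold logProfile
  refine Measurable.indicator ?_ measurableSet_Iio
  have := Real.measurable_log
  fun_prop

lemma exp_radius_lt_one {β : ℝ} (hβ : 0 < β) : Real.exp (-2 / β) < 1 :=
  Real.exp_lt_one_iff.2 (div_neg_of_neg_of_pos (by norm_num) hβ)

lemma logProfile_div (β a b : ℝ) {s : ℝ} (hs : 0 ≤ s) :
    logProfile β a s / s ^ b = logProfile β (a + b) s := by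
  rcases hs.eq_or_lt with rfl | hs
  · simp [logProfile_zero]
  rcases lt_or_ge s (Real.exp (-2 / β)) with h | h
  · rw [logProfile_of_lt h, logProfile_of_lt h, Real.rpow_add hs, div_div]
    ring
  · simp [logProfile_of_le h]

/-- The square root `s^{β/2} |log s|` of the denominator is nondecreasing on `(0, e^{-2/β})`; with
`v = -log s`, `w = -log t` this is `v / w ≤ 1 + β (v - w) / 2 ≤ e^{β (v - w) / 2}`. -/
lemma rpow_mul_log_mono {β s t : ℝ} (hβ : 0 < β) (hs : 0 < s) (hst : s ≤ t)
    (ht : t < Real.exp (-2 / β)) :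
    s ^ (β / 2) * |Real.log s| ≤ t ^ (β / 2) * |Real.log t| := by
  have ht0 := hs.trans_le hst
  have hw : Real.log t < -2 / β := (Real.log_lt_iff_lt_exp ht0).2 ht
  have hvw : Real.log s ≤ Real.log t := Real.log_le_log hs hst
  have hneg : -2 / β < 0 := div_neg_of_neg_of_pos (by norm_num) hβ
  rw [abs_of_neg (by linarith), abs_of_neg (by linarith), Real.rpow_def_of_pos hs,
    Real.rpow_def_of_pos ht0]
  have hbw : 1 ≤ -Real.log t * (β / 2) := by
    rw [lt_div_iff₀ hβ] at hw
    linarith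
  have hexp := Real.add_one_le_exp (Real.log t * (β / 2) - Real.log s * (β / 2))
  have key : -Real.log s ≤
      Real.exp (Real.log t * (β / 2) - Real.log s * (β / 2)) * -Real.log t := by
    have h1 := mul_le_mul_of_nonneg_right hexp (show 0 ≤ -Real.log t by linarith)
    nlinarith [mul_nonneg (sub_nonneg.2 hvw) (sub_nonneg.2 hbw)]
  calc Real.exp (Real.log s * (β / 2)) * -Real.log s
      ≤ Real.exp (Real.log s * (β / 2)) *
        (Real.exp (Real.log t * (β / 2) - Real.log s * (β / 2)) * -Real.log t) := by gcongr
    _ = Real.exp (Real.log t * (β / 2)) * -Real.log t := by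
      rw [← mul_assoc, ← Real.exp_add]
      ring_nf

lemma logProfile_anti {β s t : ℝ} (hβ : 0 < β) (hs : 0 < s) (hst : s ≤ t) :
    logProfile β β t ≤ logProfile β β s := by
  rcases lt_or_ge t (Real.exp (-2 / β)) with h | h
  · have hs' := hst.trans_lt h
    have hlog : Real.log s ≠ 0 :=
      (Real.log_neg hs (hs'.trans (exp_radius_lt_one hβ))).ne
    rw [logProfile_of_lt h, logProfile_of_lt hs']
    have hsq : ∀ u : ℝ, 0 < u → u ^ β * |Real.log u| ^ 2 = (u ^ (β / 2) * |Real.log u|) ^ 2 := by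
      intro u hu
      rw [mul_pow, ← Real.rpow_mul_natCast hu.le]
      norm_num
    refine one_div_le_one_div_of_le (by positivity) ?_
    rw [hsq s hs, hsq t (hs.trans_le hst)]
    have := rpow_mul_log_mono hβ hs hst h
    gcongr
  · rw [logProfile_of_le h]
    exact logProfile_nonneg _ _ hs.le

lemma logProfile_mono_exponent {β a b s : ℝ} (hβ : 0 < β) (hab : a ≤ b) (hs : 0 ≤ s) :
    logProfile β a s ≤ logProfile β b s := by
  rcases hs.eq_or_lt with rfl | hs
  · simp [logProfile_zero]
  rcases lt_or_ge s (Real.exp (-2 / β)) with h | h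
  · have h1 := h.trans (exp_radius_lt_one hβ)
    have hlog : Real.log s ≠ 0 := (Real.log_neg hs h1).ne
    rw [logProfile_of_lt h, logProfile_of_lt h]
    refine one_div_le_one_div_of_le (by positivity) ?_
    exact mul_le_mul_of_nonneg_right (Real.rpow_le_rpow_of_exponent_ge hs h1.le hab) (by positivity)
  · simp [logProfile_of_le h]

/-! ### Integrability in polar coordinates -/

/-- The polar-coordinate density of a profile of exponent `n + δ`. -/
lemma pow_mul_logProfile {n : ℕ} (hn : 1 ≤ n) {β δ s : ℝ} (hs : 0 < s)
    (h : s < Real.exp (-2 / β)) :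
    s ^ (n - 1) * logProfile β (n + δ) s = 1 / (s ^ (1 + δ) * |Real.log s| ^ 2) := by
  have hsplit : s ^ ((n : ℝ) + δ) = s ^ (n - 1) * s ^ (1 + δ) := by
    rw [← Real.rpow_natCast, ← Real.rpow_add hs, Nat.cast_sub hn]
    congr 1
    push_cast
    ring
  rw [logProfile_of_lt h, hsplit]
  field_simp

/-- Integrability of `1 / (s log² s)` near `0`, from the continuous primitive `-1 / log s`. -/
lemma integrableOn_inv_mul_log_sq {R : ℝ} (hR : R < 1) :
    IntegrableOn (fun s : ℝ => 1 / (s * |Real.log s| ^ 2)) (Ioc 0 R) := by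
  refine intervalIntegral.integrableOn_deriv_of_nonneg (g := fun s => -(Real.log s)⁻¹) ?_ ?_ ?_
  · intro s hs
    rcases hs.1.eq_or_lt with rfl | hs0
    · -- The primitive extends continuously by `0`, which is also its junk value at `s = 0`.
      have hlim : Tendsto (fun s : ℝ => -(Real.log s)⁻¹) (nhdsWithin 0 {0}ᶜ) (nhds 0) := by
        simpa using (tendsto_inv_atBot_zero.comp Real.tendsto_log_nhdsNE_zero).neg
      have : ContinuousAt (fun s : ℝ => -(Real.log s)⁻¹) 0 := by
        rw [continuousAt_iff_punctured_nhds]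
        simpa using hlim
      exact this.continuousWithinAt
    · have hlog : Real.log s ≠ 0 := (Real.log_neg hs0 (hs.2.trans_lt hR)).ne
      exact (((Real.continuousAt_log hs0.ne').inv₀ hlog).neg).continuousWithinAt
  · intro s hs
    have hlog : Real.log s ≠ 0 := (Real.log_neg hs.1 (hs.2.trans hR)).ne
    have hs0 := hs.1.ne'
    have hval : 1 / (s * |Real.log s| ^ 2) = -(-s⁻¹ / Real.log s ^ 2) := by
      rw [sq_abs]
      field_simp
    rw [hval]
    exact ((Real.hasDerivAt_log hs0).inv hlog).neg
  · intro s hs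
    have := hs.1.le
    positivity

lemma integrable_logProfile_norm {n : ℕ} (hn : 1 ≤ n) {β : ℝ} (hβ : 0 < β) :
    Integrable (fun y : Euc n => logProfile β n ‖y‖) := by
  have : Nonempty (Fin n) := ⟨⟨0, hn⟩⟩
  rw [integrable_fun_norm_addHaar volume, finrank_euclideanSpace_fin]
  have hR := exp_radius_lt_one hβ
  have hi : IntegrableOn (fun s : ℝ => s ^ (n - 1) • logProfile β n s)
      (Ioo 0 (Real.exp (-2 / β))) := by
    refine ((integrableOn_inv_mul_log_sq hR).mono_set Ioo_subset_Ioc_self).congr_fun ?_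
      measurableSet_Ioo
    intro s hs
    have := pow_mul_logProfile hn (δ := 0) hs.1 hs.2
    simp only [add_zero, Real.rpow_one] at this
    simp only [smul_eq_mul, this]
  refine hi.of_forall_sdiff_eq_zero measurableSet_Ioi ?_
  intro s hs
  have : Real.exp (-2 / β) ≤ s := by
    by_contra! h
    exact hs.2 ⟨hs.1, h⟩
  simp [logProfile_of_le this]

lemma not_integrable_logProfile_norm {n : ℕ} (hn : 1 ≤ n) {β δ : ℝ} (hβ : 0 < β) (hδ : 0 < δ) :
    ¬ Integrable (fun y : Euc n => logProfile β (n + δ) ‖y‖) := by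
  have : Nonempty (Fin n) := ⟨⟨0, hn⟩⟩
  rw [integrable_fun_norm_addHaar volume, finrank_euclideanSpace_fin]
  intro hi
  have hR := exp_radius_lt_one hβ
  have hi' := hi.mono_set (Ioo_subset_Ioi_self : Ioo 0 (Real.exp (-2 / β)) ⊆ Ioi 0)
  have hbad : IntegrableOn (fun s : ℝ => s ^ (-1 : ℝ)) (Ioo 0 (Real.exp (-2 / β))) := by
    refine (hi'.const_mul ((2 / δ) ^ 2)).mono' (by fun_prop) ?_
    refine (ae_restrict_iff' measurableSet_Ioo).2 (ae_of_all _ fun s hs => ?_)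
    have hs0 := hs.1
    have hs1 := hs.2.trans hR
    have hlog : Real.log s ≠ 0 := (Real.log_neg hs0 hs1).ne
    have hb := Real.abs_log_mul_self_rpow_lt s (δ / 2) hs0 hs1.le (by positivity)
    have hsq : s ^ δ * |Real.log s| ^ 2 ≤ (2 / δ) ^ 2 := by
      have h1 : s ^ δ * |Real.log s| ^ 2 = |Real.log s * s ^ (δ / 2)| ^ 2 := by
        rw [abs_mul, mul_pow, sq_abs (s ^ (δ / 2)), ← Real.rpow_mul_natCast hs0.le]
        norm_num
        ring
      rw [h1]
      have h2 : 1 / (δ / 2) = 2 / δ := by field_simp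
      rw [h2] at hb
      gcongr
    rw [smul_eq_mul, pow_mul_logProfile hn hs0 hs.2, Real.norm_of_nonneg (by positivity),
      Real.rpow_neg_one, Real.rpow_add hs0, Real.rpow_one, mul_one_div, le_div_iff₀ (by positivity)]
    calc s⁻¹ * (s * s ^ δ * |Real.log s| ^ 2) = s ^ δ * |Real.log s| ^ 2 := by field_simp
      _ ≤ _ := hsq
  rw [intervalIntegral.integrableOn_Ioo_rpow_iff (Real.exp_pos _)] at hbad
  exact lt_irrefl _ hbad

/-! ### Uniform bound on the Stummel integrals of exponent `β` -/

/-- Pointwise domination: the kernel is decreasing when `|y| ≤ |x - y|`, the profile when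
`|x - y| < |y|`. -/
lemma logProfile_div_dist_le {n : ℕ} {β r : ℝ} (hβ : 0 < β) (hβn : β < n) (x y : Euc n)
    (hy : dist x y < r) :
    ENNReal.ofReal (logProfile β β ‖y‖ / dist x y ^ ((n : ℝ) - β)) ≤
      (ball (0 : Euc n) r).indicator (fun z => ENNReal.ofReal (logProfile β n ‖z‖)) y +
      (ball (0 : Euc n) r).indicator (fun z => ENNReal.ofReal (logProfile β n ‖z‖)) (x - y) := by
  have hmul : ∀ s : ℝ, 0 ≤ s → logProfile β β s / s ^ ((n : ℝ) - β) = logProfile β n s := by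
    intro s hs
    rw [logProfile_div _ _ _ hs]
    congr 1
    ring
  rw [dist_eq_norm] at *
  rcases (norm_nonneg y).eq_or_lt with h0 | h0
  · simp [← h0, logProfile_zero]
  rcases (norm_nonneg (x - y)).eq_or_lt with h1 | h1
  · rw [← h1, Real.zero_rpow (by linarith)]
    simp
  rcases le_or_gt ‖y‖ ‖x - y‖ with h | h
  · refine le_trans ?_ le_self_add
    rw [indicator_of_mem (by simpa using h.trans_lt hy), ← hmul _ h0.le]
    refine ENNReal.ofReal_le_ofReal (div_le_div_of_nonneg_left (logProfile_nonneg _ _ h0.le)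
      (by positivity) (Real.rpow_le_rpow h0.le h (by linarith)))
  · refine le_trans ?_ le_add_self
    rw [indicator_of_mem (by simpa using hy), ← hmul _ h1.le]
    refine ENNReal.ofReal_le_ofReal ?_
    have := logProfile_anti hβ h1 h.le
    gcongr

/-- Bound on the Stummel integrals of exponent `β`, uniform in the centre `x`. -/
lemma lintegral_stummel_le {n : ℕ} {β r : ℝ} (hβ : 0 < β) (hβn : β < n) (x : Euc n) :
    ∫⁻ y in ball x r, ENNReal.ofReal (logProfile β β ‖y‖ / dist x y ^ ((n : ℝ) - β)) ≤
      2 * ∫⁻ y in ball (0 : Euc n) r, ENNReal.ofReal (logProfile β n ‖y‖) := by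
  have hm : Measurable
      ((ball (0 : Euc n) r).indicator (fun z => ENNReal.ofReal (logProfile β n ‖z‖))) :=
    ((measurable_logProfile β n).comp measurable_norm).ennreal_ofReal.indicator measurableSet_ball
  calc
    _ ≤ ∫⁻ y in ball x r,
        ((ball (0 : Euc n) r).indicator (fun z => ENNReal.ofReal (logProfile β n ‖z‖)) y +
        (ball (0 : Euc n) r).indicator (fun z => ENNReal.ofReal (logProfile β n ‖z‖)) (x - y)) := by
      refine setLIntegral_mono' measurableSet_ball fun y hy => ?_
      exact logProfile_div_dist_le hβ hβn x y (by rwa [mem_ball, dist_comm] at hy)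
    _ ≤ ∫⁻ y,
        ((ball (0 : Euc n) r).indicator (fun z => ENNReal.ofReal (logProfile β n ‖z‖)) y +
        (ball (0 : Euc n) r).indicator (fun z => ENNReal.ofReal (logProfile β n ‖z‖)) (x - y)) :=
      setLIntegral_le_lintegral _ _
    _ = _ := by
      rw [lintegral_add_left hm, lintegral_sub_left_eq_self, lintegral_indicator measurableSet_ball,
        two_mul]

lemma stummelModA_le {n : ℕ} {p β r : ℝ} (hp : 1 ≤ p) (hβ : 0 < β) (hβn : β < n) {f : Euc n → ℝ}
    (hf : ∀ y, |f y| ^ p = logProfile β β ‖y‖) :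
    stummelModA n p β f r ≤
      (2 * ∫⁻ y in ball (0 : Euc n) r, ENNReal.ofReal (logProfile β n ‖y‖)) ^ (1 / p) := by
  unfold stummelModA
  simp only [hf]
  exact iSup_le fun x => ENNReal.rpow_le_rpow (lintegral_stummel_le hβ hβn x) (by positivity)

lemma tendsto_volume_ball_zero {n : ℕ} (hn : 1 ≤ n) :
    Tendsto (fun r => volume (ball (0 : Euc n) r)) (nhdsWithin 0 (Ioi 0)) (nhds 0) := by
  have : Nonempty (Fin n) := ⟨⟨0, hn⟩⟩
  have h1 : Tendsto (fun r : ℝ => ENNReal.ofReal (r ^ n) * volume (ball (0 : Euc n) 1))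
      (nhdsWithin 0 (Ioi 0)) (nhds 0) := by
    have h2 : Tendsto (fun r : ℝ => ENNReal.ofReal (r ^ n)) (nhdsWithin 0 (Ioi 0)) (nhds 0) := by
      have : Continuous fun r : ℝ => ENNReal.ofReal (r ^ n) :=
        ENNReal.continuous_ofReal.comp (continuous_pow n)
      have := this.tendsto 0
      simp only [zero_pow (by omega : n ≠ 0), ENNReal.ofReal_zero] at this
      exact this.mono_left nhdsWithin_le_nhds
    simpa using ENNReal.Tendsto.mul_const h2 (Or.inr measure_ball_lt_top.ne)
  refine h1.congr' ?_
  filter_upwards [self_mem_nhdsWithin] with r hr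
  rw [Measure.addHaar_ball_of_pos volume 0 hr, finrank_euclideanSpace_fin]

/-! ### The example -/

/-- For `0 < α < β < n` and `B = B(0, e^{-2/β})`, the function
`f(y) = (χ_B(y)/(|y|^β |ln|y||²))^{1/p}` belongs to `S_{p,β}(ℝ^n)` but not to `S_{p,α}(ℝ^n)`;
hence the inclusion `S_{p,α} ⊆ S_{p,β}` is proper. -/
theorem stummel_alpha_inclusion_proper (n : ℕ) (hn : 1 ≤ n) (p α β : ℝ) (hp : 1 ≤ p)
    (hα : 0 < α) (hαβ : α < β) (hβ : β < n)
    (f : Euc n → ℝ)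
    (hf : f = fun y =>
      (Set.indicator (ball (0 : Euc n) (Real.exp (-2 / β)))
        (fun z => 1 / (‖z‖ ^ β * |Real.log ‖z‖| ^ 2)) y) ^ (1 / p)) :
    MemStummelA n p β f ∧ ¬ MemStummelA n p α f := by
  have hβ0 : 0 < β := hα.trans hαβ
  have hp0 : 0 < p := by linarith
  have hfp : ∀ y, |f y| ^ p = logProfile β β ‖y‖ := by
    intro y
    have hg : Set.indicator (ball (0 : Euc n) (Real.exp (-2 / β)))
        (fun z => 1 / (‖z‖ ^ β * |Real.log ‖z‖| ^ 2)) y = logProfile β β ‖y‖ := by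
      simp [logProfile, indicator]
    have h0 := logProfile_nonneg β β (norm_nonneg y)
    simp only [hf, hg]
    rw [abs_of_nonneg (by positivity), ← Real.rpow_mul h0, one_div_mul_cancel hp0.ne',
      Real.rpow_one]
  have hint := integrable_logProfile_norm hn hβ0
  refine ⟨⟨?_, ?_, ?_⟩, ?_⟩
  · unfold MemLocLp
    simp only [hfp]
    refine (hint.mono' ?_ (ae_of_all _ fun y => ?_)).locallyIntegrable
    · exact ((measurable_logProfile β β).comp measurable_norm).aestronglyMeasurable
    · rw [Real.norm_of_nonneg (logProfile_nonneg _ _ (norm_nonneg y))]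
      exact logProfile_mono_exponent hβ0 hβ.le (norm_nonneg y)
  · intro r _
    refine (stummelModA_le hp hβ0 hβ hfp).trans_lt ?_
    refine ENNReal.rpow_lt_top_of_nonneg (by positivity) (ENNReal.mul_ne_top (by simp) ?_)
    exact ((setLIntegral_le_lintegral _ _).trans_lt hint.lintegral_lt_top).ne
  · have hlim : Tendsto (fun r => ∫⁻ y in ball (0 : Euc n) r,
        ENNReal.ofReal (logProfile β n ‖y‖)) (nhdsWithin 0 (Ioi 0)) (nhds 0) :=
      tendsto_setLIntegral_zero hint.lintegral_lt_top.ne (tendsto_volume_ball_zero hn)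
    have hlim2 := (ENNReal.Tendsto.const_mul hlim
      (Or.inr (ENNReal.ofNat_ne_top (n := 2)))).ennrpow_const (1 / p)
    rw [mul_zero, ENNReal.zero_rpow_of_pos (by positivity)] at hlim2
    exact tendsto_of_tendsto_of_tendsto_of_le_of_le tendsto_const_nhds hlim2
      (fun _ => zero_le) (fun r => stummelModA_le hp hβ0 hβ hfp)
  · rintro ⟨-, hfin, -⟩
    have h1 := (le_iSup (fun x : Euc n => (∫⁻ y in ball x 1,
      ENNReal.ofReal (|f y| ^ p / dist x y ^ ((n : ℝ) - α))) ^ (1 / p)) 0).trans_lt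
        (hfin 1 one_pos)
    rw [ENNReal.rpow_lt_top_iff_of_pos (by positivity)] at h1
    refine not_integrable_logProfile_norm hn hβ0 (sub_pos.2 hαβ) ?_
    have heq : ∀ y : Euc n, |f y| ^ p / dist 0 y ^ ((n : ℝ) - α) =
        logProfile β (n + (β - α)) ‖y‖ := by
      intro y
      rw [hfp, dist_zero_left, logProfile_div _ _ _ (norm_nonneg y)]
      congr 1
      ring
    simp only [heq] at h1
    have hon : IntegrableOn (fun y : Euc n => logProfile β (n + (β - α)) ‖y‖) (ball 0 1) := by
      refine ⟨((measurable_logProfile _ _).comp measurable_norm).aestronglyMeasurable, ?_⟩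
      rw [hasFiniteIntegral_iff_ofReal (ae_of_all _ fun y => logProfile_nonneg _ _ (norm_nonneg y))]
      exact h1
    refine (integrableOn_iff_integrable_of_support_subset fun y hy => ?_).1 hon
    rw [mem_ball_zero_iff]
    by_contra! h
    exact hy (logProfile_of_le ((exp_radius_lt_one hβ0).le.trans h))
end

section
/- Let n ≥ 1, 0 < α < n, and 1 ≤ p₂ ≤ p₁ < ∞. Then S_{p₁,α}(ℝ^n) ⊆ S_{p₂,α}(ℝ^n). -/
/-!
For fixed `x` and `r`, the integral in the Stummel modulus is `∫ |f|^p dμ`, where `μ` is the measure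
with density `|x-y|^{α-n}` on the ball of centre `x` and radius `r`. The mass `M(r)` of `μ` is
independent of `x` by translation invariance, is finite because `α > 0`, and is monotone in `r`.
Hölder's inequality for `μ` therefore gives
`η_{p₂,α} f(r) ≤ η_{p₁,α} f(r) · M(r)^{1/p₂ - 1/p₁}` (`stummelModA_le`), and both finiteness and
decay at `0` pass from `p₁` to `p₂`. Local integrability follows from `|f|^{p₂} ≤ 1 + |f|^{p₁}`.
-/

open MeasureTheory Metric Filter Set ENNReal

/-- The total mass of the weight `|y|^{α-n}` on the ball of radius `r` about the origin. -/
noncomputable def stummelMass (n : ℕ) (α r : ℝ) : ℝ≥0∞ :=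
  ∫⁻ y in ball (0 : Euc n) r, ENNReal.ofReal ((‖y‖ ^ ((n : ℝ) - α))⁻¹)

lemma stummelMass_lt_top {n : ℕ} (hn : 1 ≤ n) {α : ℝ} (hα : 0 < α) (r : ℝ) :
    stummelMass n α r < ⊤ := by
  have h : IntegrableOn (fun y : Euc n => (‖y‖ ^ ((n : ℝ) - α))⁻¹) (ball 0 r) volume := by
    refine integrableOn_ball_of_norm_le_rpow (C := 1) (α := (n : ℝ) - α) ?_ ?_ ?_ ?_
    · simpa using hn
    · simpa using hα
    · refine Eventually.of_forall fun y => ?_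
      rw [Real.norm_of_nonneg (by positivity), one_mul, Real.rpow_neg (norm_nonneg y)]
    · exact Measurable.aestronglyMeasurable (by fun_prop)
  exact h.lintegral_lt_top

lemma stummelMass_mono (n : ℕ) (α : ℝ) : Monotone (stummelMass n α) := fun _ _ h =>
  lintegral_mono_set (ball_subset_ball h)

lemma setLIntegral_weight_eq_stummelMass (n : ℕ) (α r : ℝ) (x : Euc n) :
    ∫⁻ y in ball x r, ENNReal.ofReal ((dist x y ^ ((n : ℝ) - α))⁻¹) = stummelMass n α r := by
  rw [stummelMass, ← lintegral_indicator measurableSet_ball,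
    ← lintegral_indicator measurableSet_ball, ← lintegral_sub_left_eq_self _ x]
  refine lintegral_congr fun y => ?_
  by_cases hy : ‖y‖ < r
  · rw [indicator_of_mem (by simpa [dist_comm y x, dist_eq_norm] using hy),
      indicator_of_mem (by simpa using hy), dist_eq_norm, _root_.sub_sub_cancel]
  · rw [indicator_of_notMem (by simpa [dist_comm y x, dist_eq_norm] using hy),
      indicator_of_notMem (by simpa using hy)]

/-- Only `|f|` is known to be measurable: membership in `L^p_loc`, as encoded by `MemLocLp`,
does not constrain the sign of `f`. -/
lemma MemLocLp.aemeasurable_abs {n : ℕ} {p : ℝ} (hp : 0 < p) {f : Euc n → ℝ}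
    (hf : MemLocLp n p f) : AEMeasurable (fun y => |f y|) volume := by
  have h := (LocallyIntegrable.aestronglyMeasurable hf).aemeasurable.pow_const p⁻¹
  refine h.congr (Eventually.of_forall fun y => ?_)
  exact Real.rpow_rpow_inv (abs_nonneg _) hp.ne'

lemma MemLocLp.mono_exponent {n : ℕ} {p₁ p₂ : ℝ} (hp₂ : 0 < p₂) (hp : p₂ ≤ p₁) {f : Euc n → ℝ}
    (hf : MemLocLp n p₁ f) : MemLocLp n p₂ f := by
  have hm := hf.aemeasurable_abs (hp₂.trans_le hp)
  have h1 : LocallyIntegrable (fun y => 1 + |f y| ^ p₁) (volume : Measure (Euc n)) :=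
    (locallyIntegrable_const 1).add hf
  refine h1.mono (hm.pow_const p₂).aestronglyMeasurable (Eventually.of_forall fun y => ?_)
  have h0 : 0 ≤ |f y| := abs_nonneg _
  rw [Real.norm_of_nonneg (by positivity), Real.norm_of_nonneg (by positivity)]
  rcases le_total |f y| 1 with h | h
  · linarith [Real.rpow_le_one h0 h hp₂.le, Real.rpow_nonneg h0 p₁]
  · linarith [Real.rpow_le_rpow_of_exponent_le h hp]

/-- The weighted integrals in the Stummel modulus, as `L^p` seminorms for a weighted measure. -/
lemma eLpNorm'_weight_eq {n : ℕ} {p : ℝ} (hp : 0 < p) (α r : ℝ) (f : Euc n → ℝ) (x : Euc n) :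
    eLpNorm' (fun y => |f y|) p ((volume.restrict (ball x r)).withDensity
        fun y => ENNReal.ofReal ((dist x y ^ ((n : ℝ) - α))⁻¹)) =
      (∫⁻ y in ball x r, ENNReal.ofReal (|f y| ^ p / dist x y ^ ((n : ℝ) - α))) ^ (1 / p) := by
  rw [eLpNorm', lintegral_withDensity_eq_lintegral_mul_non_measurable _ (by fun_prop)
    (Eventually.of_forall fun y => ENNReal.ofReal_lt_top)]
  congr 1
  refine lintegral_congr fun y => ?_
  rw [Pi.mul_apply, Real.enorm_of_nonneg (abs_nonneg _),
    ENNReal.ofReal_rpow_of_nonneg (abs_nonneg _) hp.le, mul_comm,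
    ← ENNReal.ofReal_mul (by positivity), div_eq_mul_inv]

/-- Hölder's inequality for the weighted measures, uniformly in the centre. -/
lemma stummelModA_le_s6 {n : ℕ} {p₁ p₂ : ℝ} (hp₂ : 0 < p₂) (hp : p₂ ≤ p₁) (α : ℝ) {f : Euc n → ℝ}
    (hf : AEMeasurable (fun y => |f y|) volume) (r : ℝ) :
    stummelModA n p₂ α f r ≤
      stummelModA n p₁ α f r * stummelMass n α r ^ (1 / p₂ - 1 / p₁) := by
  refine iSup_le fun x => ?_
  have h := eLpNorm'_le_eLpNorm'_mul_rpow_measure_univ hp₂ hp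
    (hf.restrict.aestronglyMeasurable.mono_ac (withDensity_absolutelyContinuous
      (volume.restrict (ball x r)) fun y => ENNReal.ofReal ((dist x y ^ ((n : ℝ) - α))⁻¹)))
  rw [eLpNorm'_weight_eq hp₂, eLpNorm'_weight_eq (hp₂.trans_le hp),
    withDensity_apply _ MeasurableSet.univ, setLIntegral_univ,
    setLIntegral_weight_eq_stummelMass] at h
  refine h.trans (mul_le_mul_left ?_ _)
  exact le_iSup (fun x : Euc n => (∫⁻ y in ball x r,
    ENNReal.ofReal (|f y| ^ p₁ / dist x y ^ ((n : ℝ) - α))) ^ (1 / p₁)) x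

/-- If `0 < α < n` and `1 ≤ p₂ ≤ p₁ < ∞`, then `S_{p₁,α}(ℝ^n) ⊆ S_{p₂,α}(ℝ^n)`. -/
theorem stummel_alpha_p_inclusion (n : ℕ) (hn : 1 ≤ n) (α p₁ p₂ : ℝ)
    (hα : 0 < α) (hαn : α < n) (hp₂ : 1 ≤ p₂) (hp : p₂ ≤ p₁) :
    ∀ f : Euc n → ℝ, MemStummelA n p₁ α f → MemStummelA n p₂ α f := by
  intro f ⟨hloc, hfin, hlim⟩
  have hp₂0 : 0 < p₂ := by linarith
  have hθ : 0 ≤ 1 / p₂ - 1 / p₁ := sub_nonneg.2 (one_div_le_one_div_of_le hp₂0 hp)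
  have hle := stummelModA_le_s6 hp₂0 hp α (hloc.aemeasurable_abs (by linarith))
  have hM (r : ℝ) : stummelMass n α r ^ (1 / p₂ - 1 / p₁) < ⊤ :=
    ENNReal.rpow_lt_top_of_nonneg hθ (stummelMass_lt_top hn hα r).ne
  refine ⟨hloc.mono_exponent hp₂0 hp, fun r hr => ?_, ?_⟩
  · exact (hle r).trans_lt (ENNReal.mul_lt_top (hfin r hr) (hM r))
  · -- Near `0` the mass factor is bounded by its value at radius `1`.
    have hlim' := ENNReal.Tendsto.mul_const hlim (Or.inr (hM 1).ne)
    rw [zero_mul] at hlim'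
    refine tendsto_of_tendsto_of_tendsto_of_le_of_le' tendsto_const_nhds hlim'
      (Eventually.of_forall fun _ => zero_le) ?_
    filter_upwards [Ioo_mem_nhdsGT (zero_lt_one (α := ℝ))] with r hr
    exact (hle r).trans (by gcongr; exact stummelMass_mono n α hr.2.le)
end

section
/- Let n ≥ 1, 0 < α < n, and 1 ≤ p₂ < p₁ < ∞. For any γ with α/p₁ < γ < min{ α/p₂ , n/p₁ }, the function f(y) := |y|^{−γ} belongs to S_{p₂,α}(ℝ^n) but not to S_{p₁,α}(ℝ^n); in particular the inclusion S_{p₁,α} ⊆ S_{p₂,α} is proper. -/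
/-!
The function `|y|^{-γ}` has `p`-th power `|y|^{-γp}`, so everything is decided by the integrals
`J_s(r) = ∫_{|y|<r} |y|^{-s} dy`, which in polar coordinates are finite exactly for `s < n`.

*Membership for `p₂`.* Put `s = n - α + γp₂ < n`. The product `|y|^{-γp₂} |x-y|^{-(n-α)}` is at most
`|y|^{-s} + |x-y|^{-s}`, because the smaller of the two distances may replace the larger one in a
negative power. Integrating over `B(x,r)`, and using that `|y| < |x-y| < r` whenever the first summand
is needed, gives the bound `2 J_s(r)` uniformly in `x` (`stummel_integral_le`). It is finite, and it
tends to `0` with `r` by absolute continuity of the integral.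

*Failure for `p₁`.* Centring the ball at `x = 0` turns the Stummel integral into `J_s(r)` with
`s = n - α + γp₁ > n`, which is infinite.
-/

open MeasureTheory Metric Filter Set ENNReal

/-- Polar coordinates: `|y|^{-s}` is integrable on balls about the origin iff `s < n`. -/
lemma integrableOn_norm_rpow_ball_iff {n : ℕ} (hn : 1 ≤ n) (s : ℝ) {r : ℝ} (hr : 0 < r) :
    IntegrableOn (fun y : Euc n => ‖y‖ ^ (-s)) (ball 0 r) ↔ s < n := by
  have : Nonempty (Fin n) := ⟨⟨0, hn⟩⟩
  rw [integrableOn_fun_norm_addHaar volume (f := fun t : ℝ => t ^ (-s))]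
  rw [integrableOn_congr_fun (g := fun t : ℝ => t ^ ((n : ℝ) - 1 - s)) _ measurableSet_Ioo,
    intervalIntegral.integrableOn_Ioo_rpow_iff hr]
  · constructor <;> intro h <;> linarith
  · intro t ht
    simp only [finrank_euclideanSpace, Fintype.card_fin, smul_eq_mul]
    rw [← Real.rpow_natCast, ← Real.rpow_add ht.1, Nat.cast_sub hn]
    congr 1
    push_cast
    ring

/-- The radial integral `J_s(r) = ∫_{|y|<r} |y|^{-s} dy` controlling all Stummel integrals of
power functions. -/
noncomputable def radialInt (n : ℕ) (s r : ℝ) : ℝ≥0∞ :=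
  ∫⁻ y in ball (0 : Euc n) r, ENNReal.ofReal (‖y‖ ^ (-s))

lemma radialInt_lt_top_iff {n : ℕ} (hn : 1 ≤ n) (s : ℝ) {r : ℝ} (hr : 0 < r) :
    radialInt n s r < ⊤ ↔ s < n := by
  rw [← integrableOn_norm_rpow_ball_iff hn s hr, IntegrableOn, radialInt,
    lt_top_iff_ne_top, lintegral_ofReal_ne_top_iff_integrable]
  · exact (measurable_norm.pow_const _).aestronglyMeasurable
  · exact Eventually.of_forall fun y => by positivity

lemma tendsto_radialInt {n : ℕ} (hn : 1 ≤ n) {s : ℝ} (hs : s < n) :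
    Tendsto (radialInt n s) (nhdsWithin 0 (Ioi 0)) (nhds 0) := by
  have : Nonempty (Fin n) := ⟨⟨0, hn⟩⟩
  have hfin := ((radialInt_lt_top_iff hn s one_pos).2 hs).ne
  have hvol : Tendsto (fun r : ℝ => volume (ball (0 : Euc n) r)) (nhdsWithin 0 (Ioi 0)) (nhds 0) := by
    have h1 : Tendsto (fun r : ℝ => ENNReal.ofReal (r ^ n) * volume (ball (0 : Euc n) 1))
        (nhds 0) (nhds (ENNReal.ofReal ((0 : ℝ) ^ n) * volume (ball (0 : Euc n) 1))) := by
      refine ENNReal.Tendsto.mul_const ?_ (Or.inr measure_ball_lt_top.ne)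
      exact ENNReal.tendsto_ofReal ((continuous_pow n).tendsto 0)
    rw [zero_pow (by omega), ENNReal.ofReal_zero, zero_mul] at h1
    refine (h1.mono_left nhdsWithin_le_nhds).congr' ?_
    filter_upwards [self_mem_nhdsWithin] with r hr
    rw [Measure.addHaar_ball_of_pos _ _ hr, finrank_euclideanSpace, Fintype.card_fin]
  have hvol' : Tendsto ((volume.restrict (ball (0 : Euc n) 1)) ∘ fun r : ℝ => ball (0 : Euc n) r)
      (nhdsWithin 0 (Ioi 0)) (nhds 0) :=
    tendsto_of_tendsto_of_tendsto_of_le_of_le tendsto_const_nhds hvol (fun _ => zero_le)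
      (fun r => Measure.restrict_apply_le _ _)
  refine (tendsto_setLIntegral_zero hfin hvol').congr' ?_
  filter_upwards [Ioo_mem_nhdsGT (one_pos : (0 : ℝ) < 1)] with r hr
  rw [Measure.restrict_restrict measurableSet_ball,
    inter_eq_self_of_subset_left (ball_subset_ball hr.2.le), radialInt]

/-- In a product of negative powers the smaller base may replace the larger one. The hypothesis
`0 < q` makes the left side vanish at `a = 0`, where `0 ^ (-q) = 0`. -/
lemma rpow_div_rpow_le {a d q m : ℝ} (hq : 0 < q) (hm : 0 < m) (ha : 0 ≤ a) (hd : 0 ≤ d) :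
    a ^ (-q) / d ^ m ≤ if a < d then a ^ (-(m + q)) else d ^ (-(m + q)) := by
  rcases ha.eq_or_lt with rfl | ha
  · rw [Real.zero_rpow (by linarith : -q ≠ 0), zero_div]
    split_ifs <;> positivity
  rcases hd.eq_or_lt with rfl | hd
  · rw [Real.zero_rpow hm.ne', _root_.div_zero]
    split_ifs <;> positivity
  rw [div_eq_mul_inv, ← Real.rpow_neg hd.le]
  split_ifs with h
  · rw [show -(m + q) = -q + -m by ring, Real.rpow_add ha]
    gcongr 1
    exact Real.rpow_le_rpow_of_nonpos ha h.le (by linarith)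
  · rw [show -(m + q) = -q + -m by ring, Real.rpow_add hd]
    gcongr 1
    exact Real.rpow_le_rpow_of_nonpos hd (not_lt.1 h) (by linarith)

/-- The bound on the Stummel integral of `|y|^{-q}`, uniform in the centre `x`. -/
lemma stummel_integral_le {n : ℕ} {q m : ℝ} (hq : 0 < q) (hm : 0 < m) (x : Euc n) (r : ℝ) :
    ∫⁻ y in ball x r, ENNReal.ofReal (‖y‖ ^ (-q) / dist x y ^ m) ≤ 2 * radialInt n (m + q) r := by
  set F : Euc n → ℝ≥0∞ :=
    (ball (0 : Euc n) r).indicator fun y => ENNReal.ofReal (‖y‖ ^ (-(m + q))) with hF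
  have hFm : Measurable F :=
    (measurable_norm.pow_const _).ennreal_ofReal.indicator measurableSet_ball
  have hFint : ∫⁻ y, F y = radialInt n (m + q) r := lintegral_indicator measurableSet_ball _
  calc ∫⁻ y in ball x r, ENNReal.ofReal (‖y‖ ^ (-q) / dist x y ^ m)
      ≤ ∫⁻ y in ball x r, (F y + F (y - x)) := by
        refine setLIntegral_mono (hFm.add (hFm.comp (measurable_id.sub_const x))) fun y hy => ?_
        have hyx : ‖y - x‖ < r := by rwa [mem_ball_iff_norm] at hy
        have hle := rpow_div_rpow_le hq hm (norm_nonneg y) (norm_nonneg (y - x))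
        rw [dist_comm, dist_eq_norm]
        split_ifs at hle with h
        · refine le_trans (ENNReal.ofReal_le_ofReal hle) (le_trans (le_of_eq ?_) le_self_add)
          rw [hF, indicator_of_mem (by simpa using h.trans hyx)]
        · refine le_trans (ENNReal.ofReal_le_ofReal hle) (le_trans (le_of_eq ?_) le_add_self)
          rw [hF, indicator_of_mem (by simpa using hyx)]
    _ ≤ ∫⁻ y, (F y + F (y - x)) := setLIntegral_le_lintegral _ _
    _ = 2 * radialInt n (m + q) r := by
        rw [lintegral_add_left hFm, lintegral_sub_right_eq_self F x, hFint, two_mul]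

lemma abs_norm_rpow_rpow {n : ℕ} (γ p : ℝ) (y : Euc n) :
    |‖y‖ ^ (-γ)| ^ p = ‖y‖ ^ (-(γ * p)) := by
  rw [abs_of_nonneg (by positivity), ← Real.rpow_mul (norm_nonneg y), neg_mul]

/-- For `1 ≤ p₂ < p₁ < ∞`, `0 < α < n` and `α/p₁ < γ < min{α/p₂, n/p₁}`, the
function `f(y) = |y|^{-γ}` belongs to `S_{p₂,α}(ℝ^n)` but not to `S_{p₁,α}(ℝ^n)`;
hence the inclusion `S_{p₁,α} ⊆ S_{p₂,α}` is proper. -/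
theorem stummel_alpha_p_inclusion_proper (n : ℕ) (hn : 1 ≤ n) (α p₁ p₂ γ : ℝ)
    (hα : 0 < α) (hαn : α < n) (hp₂ : 1 ≤ p₂) (hp : p₂ < p₁)
    (hγ₁ : α / p₁ < γ) (hγ₂ : γ < α / p₂) (hγ₃ : γ < n / p₁)
    (f : Euc n → ℝ) (hf : f = fun y => ‖y‖ ^ (-γ)) :
    MemStummelA n p₂ α f ∧ ¬ MemStummelA n p₁ α f := by
  subst hf
  have hp₂0 : 0 < p₂ := by linarith
  have hp₁0 : 0 < p₁ := by linarith
  have hγ : 0 < γ := lt_trans (by positivity) hγ₁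
  have hq₂ : γ * p₂ < α := (lt_div_iff₀ hp₂0).1 hγ₂
  have hq₁ : α < γ * p₁ := (div_lt_iff₀ hp₁0).1 hγ₁
  have hm : 0 < (n : ℝ) - α := by linarith
  constructor
  · have hs : (n : ℝ) - α + γ * p₂ < n := by linarith
    have hbound : ∀ r, stummelModA n p₂ α (fun y => ‖y‖ ^ (-γ)) r
        ≤ (2 * radialInt n ((n : ℝ) - α + γ * p₂) r) ^ (1 / p₂) := fun r => by
      refine iSup_le fun x => ENNReal.rpow_le_rpow ?_ (by positivity)
      simp only [abs_norm_rpow_rpow]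
      exact stummel_integral_le (by positivity) hm x r
    refine ⟨?_, fun r hr => ?_, ?_⟩
    · simp only [MemLocLp, abs_norm_rpow_rpow]
      intro x
      refine ⟨ball 0 (‖x‖ + 1), isOpen_ball.mem_nhds (by simp), ?_⟩
      exact (integrableOn_norm_rpow_ball_iff hn _ (by positivity)).2 (hq₂.trans hαn)
    · refine (hbound r).trans_lt (ENNReal.rpow_lt_top_of_nonneg (by positivity) ?_)
      exact ENNReal.mul_ne_top (by simp) ((radialInt_lt_top_iff hn _ hr).2 hs).ne
    · refine tendsto_of_tendsto_of_tendsto_of_le_of_le tendsto_const_nhds ?_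
        (fun _ => zero_le) hbound
      have h1 := ENNReal.Tendsto.const_mul (a := 2) (tendsto_radialInt hn hs) (Or.inr (by simp))
      have h2 := h1.ennrpow_const (1 / p₂)
      rwa [mul_zero, ENNReal.zero_rpow_of_pos (by positivity)] at h2
  · rintro ⟨-, hfin, -⟩
    have h1 := (le_iSup (fun x : Euc n => (∫⁻ y in ball x 1, ENNReal.ofReal
      (|‖y‖ ^ (-γ)| ^ p₁ / dist x y ^ ((n : ℝ) - α))) ^ (1 / p₁)) 0).trans_lt (hfin 1 one_pos)
    have h2 := (ENNReal.rpow_lt_top_iff_of_pos (by positivity)).1 h1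
    have h3 : radialInt n ((n : ℝ) - α + γ * p₁) 1 < ⊤ := by
      refine lt_of_eq_of_lt (lintegral_congr fun y => ?_) h2
      rw [abs_norm_rpow_rpow, dist_zero_left]
      rcases (norm_nonneg y).eq_or_lt with h | h
      -- at the origin both sides are `0`, by `0 ^ t = 0` for `t ≠ 0`
      · rw [← h, Real.zero_rpow (by linarith : -((n : ℝ) - α + γ * p₁) ≠ 0),
          Real.zero_rpow (by linarith : -(γ * p₁) ≠ 0), zero_div]
      · rw [← Real.rpow_sub h]
        congr 2
        ring
    have h4 := (radialInt_lt_top_iff hn _ one_pos).1 h3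
    linarith
end

section
/- Let n ≥ 1 and 1 ≤ p₂ ≤ p₁ < ∞. Suppose Ψ₂ : (0,∞) → (0,∞) is measurable, satisfies ∫₀¹ Ψ₂(t)/t dt < ∞ and the growth condition Ψ₂(r)/r^n ≤ A Ψ₂(s)/s^n for all 0 < s ≤ r (for some A > 0), and suppose there exist c > 0 and δ > 0 such that Ψ₂(t) ≤ c Ψ₁(t) for all t ∈ (0,δ). Then S_{p₁,Ψ₁}(ℝ^n) ⊆ S_{p₂,Ψ₂}(ℝ^n). -/
/-!
Write `w t = Ψ₂ t / t ^ n`. Since `p₂ ≤ p₁`, the elementary bound `|f|^p₂ ≤ 1 + |f|^p₁` gives,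
for `0 < r ≤ δ`,

  `∫_{B(x,r)} |f|^p₂ w(|x-y|) dy ≤ ∫_{B(0,r)} w(|y|) dy + c (η_{p₁,Ψ₁} f(r))^p₁`

(`stummelInt_le_small`). The right-hand side does not depend on `x`; its first term is, in polar
coordinates, a multiple of `∫₀^r Ψ₂(t)/t dt`, so the whole tends to `0` with `r`
(`tendsto_lintegral_weight`). This gives the vanishing of the modulus at `0`, and a radius `ρ` at
which the integrals over `B(x,ρ)` are bounded uniformly in `x`.

For arbitrary `r`, the growth condition says that `w` is almost decreasing. Hence
`∫_{B(z,ρ)} |f|^p₂` is controlled by the weighted integral over `B(z,ρ)`, uniformly in `z`. A ball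
`B(x,r)` is covered by a number of such balls that does not depend on `x`, and outside `B(x,ρ)` the
weight `w(|x-y|)` is at most `A w(ρ)`; this bounds the weighted integral over `B(x,r)`
(`stummelInt_bounded_of_bounded`).
-/

open MeasureTheory Metric Filter Set ENNReal

/-- The integral inside the Stummel modulus, before taking the power `1 / p` and the supremum over
the centre `x`. -/
noncomputable def stummelInt (n : ℕ) (p : ℝ) (Ψ : ℝ → ℝ) (f : Euc n → ℝ) (x : Euc n) (r : ℝ) :
    ℝ≥0∞ :=
  ∫⁻ y in ball x r, ENNReal.ofReal (|f y| ^ p * Ψ (dist x y) / dist x y ^ (n : ℝ))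

lemma stummelInt_le_mod (n : ℕ) {p : ℝ} (hp : 0 < p) (Ψ : ℝ → ℝ) (f : Euc n → ℝ) (x : Euc n)
    (r : ℝ) : stummelInt n p Ψ f x r ≤ stummelMod n p Ψ f r ^ p := by
  have h : stummelInt n p Ψ f x r ^ (1 / p) ≤ stummelMod n p Ψ f r :=
    le_iSup (fun x => stummelInt n p Ψ f x r ^ (1 / p)) x
  calc stummelInt n p Ψ f x r = (stummelInt n p Ψ f x r ^ (1 / p)) ^ p := by
        rw [← ENNReal.rpow_mul, one_div_mul_cancel hp.ne', ENNReal.rpow_one]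
    _ ≤ _ := by gcongr

lemma stummelMod_le_of_int_le (n : ℕ) {p : ℝ} (hp : 0 < p) (Ψ : ℝ → ℝ) (f : Euc n → ℝ)
    (r : ℝ) {M : ℝ≥0∞} (h : ∀ x, stummelInt n p Ψ f x r ≤ M) :
    stummelMod n p Ψ f r ≤ M ^ (1 / p) :=
  iSup_le fun x => ENNReal.rpow_le_rpow (h x) (by positivity)

lemma rpow_le_one_add_rpow {a p q : ℝ} (ha : 0 ≤ a) (hp : 0 ≤ p) (hpq : p ≤ q) :
    a ^ p ≤ 1 + a ^ q := by
  rcases le_total a 1 with h | h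
  · have := Real.rpow_le_one ha h hp
    have := Real.rpow_nonneg ha q
    linarith
  · have := Real.rpow_le_rpow_of_exponent_le h hpq
    linarith

lemma memLocLp_mono (n : ℕ) {p q : ℝ} (hp : 1 ≤ p) (hpq : p ≤ q) (f : Euc n → ℝ)
    (hf : MemLocLp n q f) : MemLocLp n p f := by
  have hq : 0 < q := by linarith
  have h1 : LocallyIntegrable (fun y : Euc n => (1 : ℝ) + |f y| ^ q) volume :=
    (locallyIntegrable_const (1 : ℝ)).add hf
  refine h1.mono ?_ (Eventually.of_forall fun y => ?_)
  · -- measurability passes from `|f|^q` to `|f|^p = (|f|^q)^(p/q)`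
    have hm := hf.aestronglyMeasurable
    have hc : Continuous fun t : ℝ => t ^ (p / q) := by
      refine continuous_id.rpow_const fun _ => Or.inr (by positivity)
    refine (hc.comp_aestronglyMeasurable hm).congr (Eventually.of_forall fun y => ?_)
    simp only
    rw [← Real.rpow_mul (abs_nonneg _), mul_div_cancel₀ _ hq.ne']
  · rw [Real.norm_of_nonneg (by positivity), Real.norm_of_nonneg (by positivity)]
    exact rpow_le_one_add_rpow (abs_nonneg _) (by linarith) hpq

/-- The weight `Ψ(|y|)/|y|^n` is integrable near the origin, so its integral over `B(0,r)` vanishes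
as `r → 0`. -/
lemma tendsto_lintegral_weight (n : ℕ) (hn : 1 ≤ n) (Ψ : ℝ → ℝ)
    (hint : IntegrableOn (fun t => Ψ t / t) (Ioo (0 : ℝ) 1) volume) :
    Tendsto (fun r => ∫⁻ y in ball (0 : Euc n) r, ENNReal.ofReal (Ψ ‖y‖ / ‖y‖ ^ (n : ℝ)))
      (nhdsWithin 0 (Ioi 0)) (nhds 0) := by
  have : Nonempty (Fin n) := ⟨⟨0, hn⟩⟩
  have : Nontrivial (Euc n) := inferInstance
  have hI : IntegrableOn (fun y : Euc n => Ψ ‖y‖ / ‖y‖ ^ (n : ℝ)) (ball 0 1) volume := by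
    rw [integrableOn_fun_norm_addHaar volume (f := fun t => Ψ t / t ^ (n : ℝ))]
    refine hint.congr_fun (fun t ht => ?_) measurableSet_Ioo
    have ht0 : t ≠ 0 := ht.1.ne'
    obtain ⟨m, rfl⟩ : ∃ m, n = m + 1 := ⟨n - 1, by omega⟩
    simp only [finrank_euclideanSpace, Fintype.card_fin, smul_eq_mul, Real.rpow_natCast,
      Nat.add_sub_cancel]
    field_simp
    ring
  have hfin : ∫⁻ y in ball (0 : Euc n) 1, ENNReal.ofReal (Ψ ‖y‖ / ‖y‖ ^ (n : ℝ)) ≠ ⊤ :=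
    ((lintegral_mono fun y => Real.ofReal_le_enorm _).trans_lt hI.hasFiniteIntegral).ne
  have hvol : Tendsto (fun r : ℝ => volume (ball (0 : Euc n) r)) (nhdsWithin 0 (Ioi 0))
      (nhds 0) := by
    have h0 : Tendsto (fun r : ℝ => ENNReal.ofReal (r ^ n) * volume (ball (0 : Euc n) 1))
        (nhds 0) (nhds (ENNReal.ofReal (0 ^ n) * volume (ball (0 : Euc n) 1))) :=
      ENNReal.Tendsto.mul_const
        (ENNReal.continuous_ofReal.tendsto _ |>.comp ((continuous_pow n).tendsto 0))
        (Or.inr measure_ball_lt_top.ne)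
    rw [zero_pow (by omega), ENNReal.ofReal_zero, zero_mul] at h0
    refine (h0.mono_left nhdsWithin_le_nhds).congr' ?_
    filter_upwards [self_mem_nhdsWithin] with r hr
    rw [Measure.addHaar_ball volume (0 : Euc n) (le_of_lt hr), finrank_euclideanSpace,
      Fintype.card_fin]
  have hvol' : Tendsto ((volume.restrict (ball (0 : Euc n) 1)) ∘ fun r : ℝ => ball (0 : Euc n) r)
      (nhdsWithin 0 (Ioi 0)) (nhds 0) :=
    tendsto_of_tendsto_of_tendsto_of_le_of_le tendsto_const_nhds hvol (fun _ => zero_le)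
      fun r => Measure.restrict_apply_le _ _
  refine (tendsto_setLIntegral_zero hfin hvol').congr' ?_
  filter_upwards [Ioo_mem_nhdsGT (zero_lt_one' ℝ)] with r hr
  rw [Measure.restrict_restrict measurableSet_ball,
    inter_eq_left.2 (ball_subset_ball hr.2.le)]

lemma lintegral_weight_translate (n : ℕ) (Ψ : ℝ → ℝ) (x : Euc n) (r : ℝ) :
    ∫⁻ y in ball x r, ENNReal.ofReal (Ψ (dist x y) / dist x y ^ (n : ℝ)) =
      ∫⁻ y in ball (0 : Euc n) r, ENNReal.ofReal (Ψ ‖y‖ / ‖y‖ ^ (n : ℝ)) := by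
  rw [← lintegral_indicator measurableSet_ball, ← lintegral_indicator measurableSet_ball,
    ← lintegral_sub_right_eq_self ((ball (0 : Euc n) r).indicator _) x]
  refine lintegral_congr fun y => ?_
  simp only [indicator, mem_ball, dist_zero_right, dist_comm x y, dist_eq_norm y x]

/-- For small radii `|f|^p₂ ≤ 1 + |f|^p₁` and `Ψ₂ ≤ c Ψ₁` bound the weighted integral uniformly in
the centre. -/
lemma stummelInt_le_small (n : ℕ) (hn : 1 ≤ n) {p₁ p₂ : ℝ} (hp₂ : 1 ≤ p₂) (hp : p₂ ≤ p₁)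
    (Ψ₁ Ψ₂ : ℝ → ℝ) (hΨ₂meas : Measurable Ψ₂) (hΨ₂pos : ∀ t > 0, 0 < Ψ₂ t)
    (c δ : ℝ) (hc : 0 < c) (hle : ∀ t ∈ Ioo (0 : ℝ) δ, Ψ₂ t ≤ c * Ψ₁ t)
    (f : Euc n → ℝ) (x : Euc n) {r : ℝ} (hr : r ≤ δ) :
    stummelInt n p₂ Ψ₂ f x r ≤
      (∫⁻ y in ball (0 : Euc n) r, ENNReal.ofReal (Ψ₂ ‖y‖ / ‖y‖ ^ (n : ℝ))) +
        ENNReal.ofReal c * stummelMod n p₁ Ψ₁ f r ^ p₁ := by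
  have hn0 : (n : ℝ) ≠ 0 := by positivity
  calc stummelInt n p₂ Ψ₂ f x r
      ≤ ∫⁻ y in ball x r, (ENNReal.ofReal (Ψ₂ (dist x y) / dist x y ^ (n : ℝ)) +
          ENNReal.ofReal c *
            ENNReal.ofReal (|f y| ^ p₁ * Ψ₁ (dist x y) / dist x y ^ (n : ℝ))) := by
        refine setLIntegral_mono' measurableSet_ball fun y hy => ?_
        rcases (dist_nonneg (x := x) (y := y)).eq_or_lt with h | h
        · -- on the diagonal the junk value `a / 0 = 0` makes both sides vanish
          simp [← h, Real.zero_rpow hn0]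
        · have hd : dist x y < δ := by
            rw [dist_comm]
            exact lt_of_lt_of_le hy hr
          have h1 := hle _ ⟨h, hd⟩
          have h2 := hΨ₂pos _ h
          have hD : 0 < dist x y ^ (n : ℝ) := Real.rpow_pos_of_pos h _
          have ha := rpow_le_one_add_rpow (abs_nonneg (f y)) (by linarith) hp
          have hb : 0 ≤ |f y| ^ p₁ := by positivity
          rw [← ENNReal.ofReal_mul hc.le, ← ENNReal.ofReal_add (by positivity)]
          · apply ENNReal.ofReal_le_ofReal
            rw [← mul_div_assoc, ← add_div]
            gcongr
            nlinarith [mul_le_mul_of_nonneg_right ha h2.le, mul_le_mul_of_nonneg_left h1 hb]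
          · have h3 : 0 ≤ |f y| ^ p₁ * (c * Ψ₁ (dist x y)) := mul_nonneg hb (h2.le.trans h1)
            rw [← mul_div_assoc]
            exact div_nonneg (by linarith) hD.le
    _ = (∫⁻ y in ball (0 : Euc n) r, ENNReal.ofReal (Ψ₂ ‖y‖ / ‖y‖ ^ (n : ℝ))) +
          ENNReal.ofReal c * stummelInt n p₁ Ψ₁ f x r := by
        rw [lintegral_add_left (by fun_prop), lintegral_const_mul' _ _ ENNReal.ofReal_ne_top,
          lintegral_weight_translate, stummelInt]
    _ ≤ _ := by
        gcongr
        exact stummelInt_le_mod n (by linarith) _ _ _ _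

/-- A bound on the integrals over balls of one radius, uniform in the centre, passes to every other
radius: the number of balls of radius `ρ` needed to cover `B(x,r)` does not depend on `x`. -/
lemma lintegral_ball_bounded_of_bounded (n : ℕ) (F : Euc n → ℝ≥0∞) {ρ : ℝ} (hρ : 0 < ρ)
    {M : ℝ≥0∞} (hM : M ≠ ⊤) (h : ∀ x, ∫⁻ y in ball x ρ, F y ≤ M) (r : ℝ) :
    ∃ N : ℝ≥0∞, N ≠ ⊤ ∧ ∀ x, ∫⁻ y in ball x r, F y ≤ N := by
  obtain ⟨t, -, htf, ht⟩ :=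
    (isCompact_closedBall (0 : Euc n) r).finite_cover_balls hρ
  have : Fintype t := htf.fintype
  refine ⟨∑ _i : t, M, by simp [ENNReal.mul_eq_top, hM], fun x => ?_⟩
  have hsub : ball x r ⊆ ⋃ z : t, ball (x + z) ρ := by
    intro y hy
    have hy' : y - x ∈ closedBall (0 : Euc n) r := by
      rw [mem_closedBall, dist_zero_right, ← dist_eq_norm]
      exact le_of_lt hy
    obtain ⟨z, hz, hyz⟩ := mem_iUnion₂.1 (ht hy')
    refine mem_iUnion.2 ⟨⟨z, hz⟩, ?_⟩
    rw [mem_ball, dist_eq_norm] at hyz ⊢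
    rwa [← sub_sub]
  calc ∫⁻ y in ball x r, F y ≤ ∫⁻ y in ⋃ z : t, ball (x + z) ρ, F y := lintegral_mono_set hsub
    _ ≤ ∑' z : t, ∫⁻ y in ball (x + z) ρ, F y := lintegral_iUnion_le _ _
    _ = ∑ z : t, ∫⁻ y in ball (x + z) ρ, F y := tsum_fintype _
    _ ≤ _ := Finset.sum_le_sum fun z _ => h _

/-- The same passage from one radius to all radii for the weighted integrals; it rests on the weight
`Ψ t / t ^ n` being almost decreasing. -/
lemma stummelInt_bounded_of_bounded (n : ℕ) (hn : 1 ≤ n) (p : ℝ) (Ψ : ℝ → ℝ)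
    (hpos : ∀ t > 0, 0 < Ψ t) (A : ℝ) (hA : 0 < A)
    (hgrowth : ∀ s r : ℝ, 0 < s → s ≤ r → Ψ r / r ^ (n : ℝ) ≤ A * (Ψ s / s ^ (n : ℝ)))
    (f : Euc n → ℝ) {ρ : ℝ} (hρ : 0 < ρ) {M : ℝ≥0∞} (hM : M ≠ ⊤)
    (h : ∀ x, stummelInt n p Ψ f x ρ ≤ M) (r : ℝ) :
    ∃ N : ℝ≥0∞, N ≠ ⊤ ∧ ∀ x, stummelInt n p Ψ f x r ≤ N := by
  have : Nonempty (Fin n) := ⟨⟨0, hn⟩⟩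
  have : Nontrivial (Euc n) := inferInstance
  set w : ℝ := Ψ ρ / ρ ^ (n : ℝ) with hw
  have hwpos : 0 < w := div_pos (hpos _ hρ) (Real.rpow_pos_of_pos hρ _)
  have hunif : ∀ x, ∫⁻ y in ball x ρ, ENNReal.ofReal (|f y| ^ p) ≤
      ENNReal.ofReal (A / w) * M := by
    intro x
    calc ∫⁻ y in ball x ρ, ENNReal.ofReal (|f y| ^ p)
        ≤ ∫⁻ y in ball x ρ, ENNReal.ofReal (A / w) *
            ENNReal.ofReal (|f y| ^ p * Ψ (dist x y) / dist x y ^ (n : ℝ)) := by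
          refine lintegral_mono_ae ?_
          -- the centre `y = x`, where the weight takes a junk value, is a null set
          have hne : ∀ᵐ y ∂(volume.restrict (ball x ρ)), y ≠ x :=
            ae_restrict_of_ae (Measure.ae_ne volume x)
          filter_upwards [hne, ae_restrict_mem measurableSet_ball] with y hyx hy
          have hd : 0 < dist x y := dist_pos.2 hyx.symm
          have hdρ : dist x y ≤ ρ := by
            rw [dist_comm]
            exact le_of_lt hy
          have hg : w ≤ A * (Ψ (dist x y) / dist x y ^ (n : ℝ)) := hgrowth _ _ hd hdρ
          rw [← ENNReal.ofReal_mul (by positivity)]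
          apply ENNReal.ofReal_le_ofReal
          have ha : 0 ≤ |f y| ^ p := by positivity
          calc |f y| ^ p = |f y| ^ p * w / w := by field_simp
            _ ≤ |f y| ^ p * (A * (Ψ (dist x y) / dist x y ^ (n : ℝ))) / w := by gcongr
            _ = _ := by ring
      _ = ENNReal.ofReal (A / w) * stummelInt n p Ψ f x ρ :=
          lintegral_const_mul' _ _ ENNReal.ofReal_ne_top
      _ ≤ _ := by gcongr; exact h x
  obtain ⟨N, hN, hNb⟩ := lintegral_ball_bounded_of_bounded n _ hρ
    (ENNReal.mul_ne_top ENNReal.ofReal_ne_top hM) hunif r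
  refine ⟨M + ENNReal.ofReal (A * w) * N,
    ENNReal.add_ne_top.2 ⟨hM, ENNReal.mul_ne_top ENNReal.ofReal_ne_top hN⟩, fun x => ?_⟩
  have hsub : ball x r ⊆ ball x ρ ∪ (ball x r \ ball x ρ) := by
    rw [union_sdiff_self]
    exact subset_union_right
  calc stummelInt n p Ψ f x r
      ≤ stummelInt n p Ψ f x ρ + ∫⁻ y in ball x r \ ball x ρ,
          ENNReal.ofReal (|f y| ^ p * Ψ (dist x y) / dist x y ^ (n : ℝ)) :=
        (lintegral_mono_set hsub).trans (lintegral_union_le _ _ _)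
    _ ≤ M + ∫⁻ y in ball x r \ ball x ρ,
          ENNReal.ofReal (A * w) * ENNReal.ofReal (|f y| ^ p) := by
        refine add_le_add (h x)
          (setLIntegral_mono' (measurableSet_ball.diff measurableSet_ball) fun y hy => ?_)
        have hdρ : ρ ≤ dist x y := by
          rw [dist_comm]
          exact not_lt.1 hy.2
        rw [← ENNReal.ofReal_mul (by positivity)]
        apply ENNReal.ofReal_le_ofReal
        rw [mul_div_assoc, mul_comm]
        gcongr
        exact hgrowth _ _ hρ hdρ
    _ = M + ENNReal.ofReal (A * w) *
          ∫⁻ y in ball x r \ ball x ρ, ENNReal.ofReal (|f y| ^ p) := by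
        rw [lintegral_const_mul' _ _ ENNReal.ofReal_ne_top]
    _ ≤ _ := by
        gcongr
        exact (lintegral_mono_set sdiff_subset).trans (hNb x)

/-- If `1 ≤ p₂ ≤ p₁ < ∞`, `Ψ₂` satisfies `∫₀¹ Ψ₂(t)/t dt < ∞` and
`Ψ₂(r)/r^n ≤ A Ψ₂(s)/s^n` for `0 < s ≤ r`, and `Ψ₂(t) ≤ c Ψ₁(t)` on `(0,δ)`, then
`S_{p₁,Ψ₁}(ℝ^n) ⊆ S_{p₂,Ψ₂}(ℝ^n)`. -/
theorem stummel_inclusion_general (n : ℕ) (hn : 1 ≤ n) (p₁ p₂ : ℝ)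
    (hp₂ : 1 ≤ p₂) (hp : p₂ ≤ p₁)
    (Ψ₁ Ψ₂ : ℝ → ℝ) (hΨ₁meas : Measurable Ψ₁) (hΨ₂meas : Measurable Ψ₂)
    (hΨ₁pos : ∀ t > 0, 0 < Ψ₁ t) (hΨ₂pos : ∀ t > 0, 0 < Ψ₂ t)
    (hint : IntegrableOn (fun t => Ψ₂ t / t) (Ioo (0 : ℝ) 1) volume)
    (A : ℝ) (hA : 0 < A)
    (hgrowth : ∀ s r : ℝ, 0 < s → s ≤ r → Ψ₂ r / r ^ (n : ℝ) ≤ A * (Ψ₂ s / s ^ (n : ℝ)))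
    (c δ : ℝ) (hc : 0 < c) (hδ : 0 < δ)
    (hle : ∀ t ∈ Ioo (0 : ℝ) δ, Ψ₂ t ≤ c * Ψ₁ t) :
    ∀ f : Euc n → ℝ, MemStummel n p₁ Ψ₁ f → MemStummel n p₂ Ψ₂ f := by
  intro f hf
  obtain ⟨hloc, hfin, hlim⟩ := hf
  have hp₁0 : 0 < p₁ := by linarith
  have hp₂0 : 0 < p₂ := by linarith
  set M : ℝ → ℝ≥0∞ := fun r =>
    (∫⁻ y in ball (0 : Euc n) r, ENNReal.ofReal (Ψ₂ ‖y‖ / ‖y‖ ^ (n : ℝ))) +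
      ENNReal.ofReal c * stummelMod n p₁ Ψ₁ f r ^ p₁ with hM
  have hsmall : ∀ r ≤ δ, ∀ x, stummelInt n p₂ Ψ₂ f x r ≤ M r := fun r hr x =>
    stummelInt_le_small n hn hp₂ hp Ψ₁ Ψ₂ hΨ₂meas hΨ₂pos c δ hc hle f x hr
  have hMlim : Tendsto M (nhdsWithin 0 (Ioi 0)) (nhds 0) := by
    have h1 := (ENNReal.continuous_rpow_const (y := p₁)).tendsto 0 |>.comp hlim
    have h2 := ENNReal.Tendsto.const_mul (a := ENNReal.ofReal c) h1
      (Or.inr ENNReal.ofReal_ne_top)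
    rw [ENNReal.zero_rpow_of_pos hp₁0, mul_zero] at h2
    have h3 := (tendsto_lintegral_weight n hn Ψ₂ hint).add h2
    rwa [add_zero] at h3
  refine ⟨memLocLp_mono n hp₂ hp f hloc, fun r _ => ?_, ?_⟩
  · obtain ⟨ρ, hMρ, hρ0, hρδ⟩ := ((hMlim.eventually_lt_const ENNReal.zero_lt_top).and
      (Ioo_mem_nhdsGT hδ)).exists
    obtain ⟨N, hN, hNb⟩ := stummelInt_bounded_of_bounded n hn p₂ Ψ₂ hΨ₂pos A hA hgrowth f
      hρ0 hMρ.ne (hsmall ρ hρδ.le) r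
    exact (stummelMod_le_of_int_le n hp₂0 Ψ₂ f r hNb).trans_lt
      (ENNReal.rpow_lt_top_of_nonneg (by positivity) hN)
  · have h3 := (ENNReal.continuous_rpow_const (y := 1 / p₂)).tendsto 0 |>.comp hMlim
    rw [ENNReal.zero_rpow_of_pos (by positivity)] at h3
    refine tendsto_of_tendsto_of_tendsto_of_le_of_le' tendsto_const_nhds h3
      (Eventually.of_forall fun _ => zero_le) ?_
    filter_upwards [Ioo_mem_nhdsGT hδ] with r hr
    exact stummelMod_le_of_int_le n hp₂0 Ψ₂ f r (hsmall r hr.2.le)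
end

section
/- Let n ≥ 1 and 1 ≤ p₂ ≤ p₁ < ∞. Suppose Ψ₁ : (0,∞) → (0,∞) satisfies Ψ₁(r)/r^n ≤ A Ψ₁(s)/s^n for all 0 < s ≤ r (for some A > 0). If f ∈ S_{p₁,Ψ₁}(ℝ^n) and there exist a measurable Ψ₂ : (0,∞) → (0,∞) and c > 0 such that η_{p₁,Ψ₁}f(r) ≤ c Ψ₁(r)^{1/p₁} Ψ₂(r) for every r > 0, then f ∈ L^{p₂,Ψ₂}(ℝ^n). -/
/-!
On `B = B(x,r)` the growth condition gives `1 ≤ (A r^n / Ψ₁(r)) · Ψ₁(|x-y|)/|x-y|^n` for `y ≠ x`,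
so that `∫_B |f|^{p₁}` is at most `A r^n / Ψ₁(r)` times the Stummel integral of `f` over `B`
(`lintegral_le_stummel`). Hölder's inequality on `B` lowers the exponent from `p₁` to `p₂`
(`lintegral_holder`). In the Morrey quotient the factors `r^n`, `Ψ₁(r)` and `Ψ₂(r)` cancel, and the
bound `|B(0,1)|^{-1/p₁} A^{1/p₁} c`, independent of `x` and `r`, remains.
-/

open MeasureTheory Metric Filter Set ENNReal

/-- The measurability content of `f ∈ L^p_loc`: `|f|` is recovered as `(|f|^p)^{1/p}`. -/
lemma MemLocLp.aestronglyMeasurable_abs {n : ℕ} {p : ℝ} (hp : 0 < p) {f : Euc n → ℝ}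
    (hf : MemLocLp n p f) : AEStronglyMeasurable (fun y => |f y|) volume := by
  have h := (LocallyIntegrable.aestronglyMeasurable hf).aemeasurable.pow_const (1 / p)
  refine h.aestronglyMeasurable.congr (Eventually.of_forall fun y => ?_)
  simp only []
  rw [← Real.rpow_mul (abs_nonneg _), mul_one_div_cancel hp.ne', Real.rpow_one]

lemma MemLocLp.mono_exponent_s11 {n : ℕ} {p q : ℝ} (hq : 0 < q) (hqp : q ≤ p) {f : Euc n → ℝ}
    (hf : MemLocLp n p f) : MemLocLp n q f := by
  have hm := hf.aestronglyMeasurable_abs (hq.trans_le hqp)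
  have h1 : LocallyIntegrable (fun y => 1 + |f y| ^ p) (volume : Measure (Euc n)) :=
    (locallyIntegrable_const (1 : ℝ)).add hf
  refine LocallyIntegrable.mono h1 (hm.aemeasurable.pow_const q).aestronglyMeasurable
    (Eventually.of_forall fun y => ?_)
  have h0 : 0 ≤ |f y| ^ p := Real.rpow_nonneg (abs_nonneg _) _
  rw [Real.norm_of_nonneg (Real.rpow_nonneg (abs_nonneg _) _), Real.norm_of_nonneg (by linarith)]
  rcases le_total (|f y|) 1 with h | h
  · have := Real.rpow_le_one (abs_nonneg (f y)) h hq.le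
    linarith
  · have := Real.rpow_le_rpow_of_exponent_le h hqp
    linarith

lemma lintegral_holder {n : ℕ} {p q : ℝ} (hq : 0 < q) (hqp : q ≤ p) {f : Euc n → ℝ}
    (hm : AEStronglyMeasurable (fun y => |f y|) volume) (s : Set (Euc n)) :
    (∫⁻ y in s, ENNReal.ofReal (|f y| ^ q)) ^ (1 / q) ≤
      (∫⁻ y in s, ENNReal.ofReal (|f y| ^ p)) ^ (1 / p) * volume s ^ (1 / q - 1 / p) := by
  have h := eLpNorm'_le_eLpNorm'_mul_rpow_measure_univ hq hqp (hm.restrict (s := s))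
  have key : ∀ t : ℝ, 0 < t → eLpNorm' (fun y => |f y|) t (volume.restrict s) =
      (∫⁻ y in s, ENNReal.ofReal (|f y| ^ t)) ^ (1 / t) := by
    intro t ht
    unfold eLpNorm'
    congr 1
    refine lintegral_congr fun y => ?_
    rw [← ENNReal.ofReal_rpow_of_nonneg (abs_nonneg _) ht.le, Real.enorm_of_nonneg (abs_nonneg _)]
  rwa [key q hq, key p (hq.trans_le hqp), Measure.restrict_apply_univ] at h

/-- Pointwise comparison off `y = x`; that point, where the right-hand integrand takes the junk
value `0`, is null because `n ≥ 1`. -/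
lemma lintegral_le_stummel {n : ℕ} (hn : 1 ≤ n) {p A r : ℝ} {Ψ : ℝ → ℝ}
    (hΨ : ∀ t > 0, 0 < Ψ t) (hA : 0 < A) (hr : 0 < r)
    (hgrowth : ∀ s r : ℝ, 0 < s → s ≤ r → Ψ r / r ^ (n : ℝ) ≤ A * (Ψ s / s ^ (n : ℝ)))
    (f : Euc n → ℝ) (x : Euc n) :
    (∫⁻ y in ball x r, ENNReal.ofReal (|f y| ^ p)) ≤
      ENNReal.ofReal (A * r ^ (n : ℝ) / Ψ r) *
        ∫⁻ y in ball x r, ENNReal.ofReal (|f y| ^ p * Ψ (dist x y) / dist x y ^ (n : ℝ)) := by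
  rw [← lintegral_const_mul' _ _ ENNReal.ofReal_ne_top]
  have : Nonempty (Fin n) := ⟨⟨0, hn⟩⟩
  have hne : ∀ᵐ y ∂(volume : Measure (Euc n)), y ≠ x := by
    simp [ae_iff, measure_singleton]
  refine lintegral_mono_ae ?_
  filter_upwards [ae_restrict_of_ae hne, ae_restrict_mem measurableSet_ball] with y hy hyr
  have hd : 0 < dist x y := dist_pos.2 (Ne.symm hy)
  have hdr : dist x y ≤ r := by rw [dist_comm]; exact (mem_ball.1 hyr).le
  have hrn : 0 < r ^ (n : ℝ) := Real.rpow_pos_of_pos hr _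
  have hΨr := hΨ r hr
  rw [← ENNReal.ofReal_mul (by positivity)]
  apply ENNReal.ofReal_le_ofReal
  have h0 : 0 ≤ |f y| ^ p := Real.rpow_nonneg (abs_nonneg _) _
  have hg := hgrowth _ r hd hdr
  have h1 : 1 ≤ r ^ (n : ℝ) / Ψ r * (A * (Ψ (dist x y) / dist x y ^ (n : ℝ))) := by
    calc (1 : ℝ) = r ^ (n : ℝ) / Ψ r * (Ψ r / r ^ (n : ℝ)) := by field_simp
      _ ≤ _ := by gcongr
  calc |f y| ^ p = |f y| ^ p * 1 := (mul_one _).symm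
    _ ≤ |f y| ^ p * (r ^ (n : ℝ) / Ψ r * (A * (Ψ (dist x y) / dist x y ^ (n : ℝ)))) := by gcongr
    _ = _ := by ring

/-- If `Ψ₁(r)/r^n ≤ A Ψ₁(s)/s^n` for `0 < s ≤ r`, `f ∈ S_{p₁,Ψ₁}(ℝ^n)` and
`η_{p₁,Ψ₁}f(r) ≤ c Ψ₁(r)^{1/p₁} Ψ₂(r)` for every `r > 0`, then `f ∈ L^{p₂,Ψ₂}(ℝ^n)`. -/
theorem stummel_subset_morrey (n : ℕ) (hn : 1 ≤ n) (p₁ p₂ : ℝ)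
    (hp₂ : 1 ≤ p₂) (hp : p₂ ≤ p₁)
    (Ψ₁ Ψ₂ : ℝ → ℝ) (hΨ₁meas : Measurable Ψ₁) (hΨ₂meas : Measurable Ψ₂)
    (hΨ₁pos : ∀ t > 0, 0 < Ψ₁ t) (hΨ₂pos : ∀ t > 0, 0 < Ψ₂ t)
    (A : ℝ) (hA : 0 < A)
    (hgrowth : ∀ s r : ℝ, 0 < s → s ≤ r → Ψ₁ r / r ^ (n : ℝ) ≤ A * (Ψ₁ s / s ^ (n : ℝ)))
    (f : Euc n → ℝ) (hf : MemStummel n p₁ Ψ₁ f)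
    (c : ℝ) (hc : 0 < c)
    (hbound : ∀ r > 0, stummelMod n p₁ Ψ₁ f r ≤
      ENNReal.ofReal (c * Ψ₁ r ^ (1 / p₁) * Ψ₂ r)) :
    MemMorrey n p₂ Ψ₂ f := by
  have hq0 : 0 < p₂ := by linarith
  have hp0 : 0 < p₁ := by linarith
  have hm := hf.1.aestronglyMeasurable_abs hp0
  refine ⟨hf.1.mono_exponent_s11 hq0 hp, ?_⟩
  set ω : ℝ≥0∞ := volume (ball (0 : Euc n) 1) with hω
  have hω0 : ω ≠ 0 := (measure_ball_pos _ _ one_pos).ne'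
  have hωt : ω ≠ ⊤ := measure_ball_lt_top.ne
  refine lt_of_le_of_lt (b := ω⁻¹ ^ (1 / p₁) * ENNReal.ofReal (A ^ (1 / p₁) * c)) ?_
    (ENNReal.mul_lt_top (ENNReal.rpow_lt_top_of_nonneg (by positivity) (ENNReal.inv_ne_top.2 hω0))
      ENNReal.ofReal_lt_top)
  unfold morreyNorm
  refine iSup_le fun x => iSup_le fun r => iSup_le fun hr => ?_
  have hrn : 0 < r ^ (n : ℝ) := Real.rpow_pos_of_pos hr _
  have hΨ₁r := hΨ₁pos r hr
  have hΨ₂r := hΨ₂pos r hr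
  have hV : volume (ball x r) = ENNReal.ofReal (r ^ (n : ℝ)) * ω := by
    rw [Measure.addHaar_ball_of_pos _ _ hr, finrank_euclideanSpace_fin, Real.rpow_natCast]
  have hV0 : volume (ball x r) ≠ 0 := (measure_ball_pos _ _ hr).ne'
  have hVt : volume (ball x r) ≠ ⊤ := measure_ball_lt_top.ne
  have hVinv : (volume (ball x r))⁻¹ = ENNReal.ofReal (r ^ (n : ℝ))⁻¹ * ω⁻¹ := by
    rw [hV, ENNReal.mul_inv (Or.inr hωt) (Or.inr hω0), ENNReal.ofReal_inv_of_pos hrn]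
  have hI : (∫⁻ y in ball x r, ENNReal.ofReal (|f y| ^ p₁)) ^ (1 / p₁) ≤
      ENNReal.ofReal ((A * r ^ (n : ℝ) / Ψ₁ r) ^ (1 / p₁) * (c * Ψ₁ r ^ (1 / p₁) * Ψ₂ r)) := by
    rw [ENNReal.ofReal_mul (by positivity),
      ← ENNReal.ofReal_rpow_of_nonneg (by positivity) (by positivity)]
    refine (ENNReal.rpow_le_rpow (lintegral_le_stummel hn hΨ₁pos hA hr hgrowth f x)
      (by positivity)).trans ?_
    rw [ENNReal.mul_rpow_of_nonneg _ _ (by positivity)]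
    gcongr
    refine le_trans ?_ (hbound r hr)
    exact le_iSup (fun x : Euc n => (∫⁻ y in ball x r,
      ENNReal.ofReal (|f y| ^ p₁ * Ψ₁ (dist x y) / dist x y ^ (n : ℝ))) ^ (1 / p₁)) x
  have hVV : (volume (ball x r))⁻¹ ^ (1 / p₂) * volume (ball x r) ^ (1 / p₂ - 1 / p₁) =
      (volume (ball x r))⁻¹ ^ (1 / p₁) := by
    rw [ENNReal.inv_rpow, ENNReal.inv_rpow, ← ENNReal.rpow_neg, ← ENNReal.rpow_neg,
      ← ENNReal.rpow_add _ _ hV0 hVt]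
    congr 1
    ring
  have hreal : (r ^ (n : ℝ))⁻¹ ^ (1 / p₁) * ((Ψ₂ r)⁻¹ *
      ((A * r ^ (n : ℝ) / Ψ₁ r) ^ (1 / p₁) * (c * Ψ₁ r ^ (1 / p₁) * Ψ₂ r))) =
      A ^ (1 / p₁) * c := by
    rw [Real.div_rpow (by positivity) hΨ₁r.le, Real.mul_rpow hA.le hrn.le, Real.inv_rpow hrn.le]
    have h1 : 0 < (r ^ (n : ℝ)) ^ (1 / p₁) := Real.rpow_pos_of_pos hrn _
    have h2 : 0 < Ψ₁ r ^ (1 / p₁) := Real.rpow_pos_of_pos hΨ₁r _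
    generalize (r ^ (n : ℝ)) ^ (1 / p₁) = a at *
    generalize Ψ₁ r ^ (1 / p₁) = b at *
    field_simp
  calc (volume (ball x r))⁻¹ ^ (1 / p₂) * ENNReal.ofReal (Ψ₂ r)⁻¹ *
        (∫⁻ y in ball x r, ENNReal.ofReal (|f y| ^ p₂)) ^ (1 / p₂)
      ≤ (volume (ball x r))⁻¹ ^ (1 / p₂) * ENNReal.ofReal (Ψ₂ r)⁻¹ *
        (ENNReal.ofReal ((A * r ^ (n : ℝ) / Ψ₁ r) ^ (1 / p₁) * (c * Ψ₁ r ^ (1 / p₁) * Ψ₂ r)) *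
          volume (ball x r) ^ (1 / p₂ - 1 / p₁)) := by
        gcongr
        exact (lintegral_holder hq0 hp hm _).trans (by gcongr)
    _ = (volume (ball x r))⁻¹ ^ (1 / p₁) * (ENNReal.ofReal (Ψ₂ r)⁻¹ *
        ENNReal.ofReal ((A * r ^ (n : ℝ) / Ψ₁ r) ^ (1 / p₁) * (c * Ψ₁ r ^ (1 / p₁) * Ψ₂ r))) := by
        rw [← hVV]; ring
    _ = ω⁻¹ ^ (1 / p₁) * ENNReal.ofReal (A ^ (1 / p₁) * c) := by
        rw [hVinv, ENNReal.mul_rpow_of_nonneg _ _ (by positivity),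
          ENNReal.ofReal_rpow_of_nonneg (by positivity) (by positivity),
          mul_comm (ENNReal.ofReal _) (ω⁻¹ ^ (1 / p₁)), mul_assoc,
          ← ENNReal.ofReal_mul (by positivity), ← ENNReal.ofReal_mul (by positivity), hreal]
end

section
/- Let n ≥ 1 and 1 ≤ p₂ < p₁ < ∞. Suppose Ψ₁ : (0,∞) → (0,∞) satisfies the doubling condition (there is A₁ > 0 with A₁⁻¹ ≤ Ψ₁(s)/Ψ₁(r) ≤ A₁ whenever 1 ≤ s/r ≤ 2), Ψ₂ : (0,∞) → (0,∞) satisfies the right-doubling condition (there is A₃ > 0 with Ψ₂(s)/Ψ₂(r) ≤ A₃ whenever 1 ≤ s/r ≤ 2), and ∫₀¹ Ψ₁(t)^{p₂} Ψ₂(t)/t dt < ∞. Then wL^{p₁,Ψ₁}(ℝ^n) ⊆ S_{p₂,Ψ₂}(ℝ^n). -/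
/-!
Weak-type control at exponent `p₁` upgrades to strong control at any `p₂ < p₁` on each ball
(Kolmogorov's inequality, `lintegral_rpow_le_of_weak`):
`∫_{B(x,r)} |f|^{p₂} ≤ C Ψ₁(r)^{p₂} |B(x,r)|`. This already gives local integrability.

For the Stummel modulus, right-doubling of `Ψ₂` bounds the kernel by an average over radii,
`Ψ₂(d) / d^n ≤ 2 A₃ ∫_{d/2}^d Ψ₂(t) t^{-n-1} dt` (`kernel_le_lintegral`). Inserting this with
`d = |x - y|` and applying Tonelli's theorem, the inner integral of `|f|^{p₂}` is over points with
`|x - y| < 2t`, so Kolmogorov's inequality and the doubling of `Ψ₁` give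
`∫_{B(x,r)} |f(y)|^{p₂} Ψ₂(|x-y|) / |x-y|^n dy ≤ K ∫_0^r Ψ₁(t)^{p₂} Ψ₂(t) / t dt`
uniformly in `x` (`stummel_lintegral_le`). The right-hand side is finite for every `r`
(`weight_lintegral_lt_top`) and tends to `0` with `r` by absolute continuity of the integral.
-/

open MeasureTheory Metric Filter Set ENNReal

/-- The weak Morrey condition as a distributional estimate on every ball. -/
lemma measure_superlevel_le {n : ℕ} {p : ℝ} (hp : 0 < p) {Ψ : ℝ → ℝ}
    (hΨ : ∀ t > 0, 0 < Ψ t) {f : Euc n → ℝ} (hf : weakMorreyNorm n p Ψ f < ⊤) :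
    ∃ M : ℝ, 0 < M ∧ ∀ (x : Euc n) (r t : ℝ), 0 < r → 0 < t →
      volume {y ∈ ball x r | t < |f y|} ≤
        ENNReal.ofReal ((M * Ψ r / t) ^ p) * volume (ball x r) := by
  refine ⟨(weakMorreyNorm n p Ψ f).toReal + 1, by positivity, fun x r t hr ht => ?_⟩
  set N := weakMorreyNorm n p Ψ f with hN
  have hNM : N ≤ ENNReal.ofReal (N.toReal + 1) :=
    (ENNReal.le_ofReal_iff_toReal_le hf.ne (by positivity)).2 (by linarith)
  set M := N.toReal + 1 with hM
  have hMpos : 0 < M := by positivity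
  set V := volume {y ∈ ball x r | t < |f y|}
  set B := volume (ball x r) with hB
  have hB0 : B ≠ 0 := (measure_ball_pos volume x hr).ne'
  have hBt : B ≠ ⊤ := measure_ball_lt_top.ne
  have hΨr := hΨ r hr
  have hBp0 : B ^ (1 / p) ≠ 0 := by
    simp [ENNReal.rpow_eq_zero_iff, hB0, hBt]
  have hBpt : B ^ (1 / p) ≠ ⊤ := ENNReal.rpow_ne_top_of_nonneg (by positivity) hBt
  have h1 : ENNReal.ofReal t * V ^ (1 / p) / (ENNReal.ofReal (Ψ r) * B ^ (1 / p)) ≤ N := by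
    rw [hN]; unfold weakMorreyNorm
    exact le_iSup_of_le x (le_iSup_of_le r (le_iSup_of_le hr (le_iSup_of_le t
      (le_iSup_of_le ht le_rfl))))
  have h2 := (ENNReal.div_le_iff (mul_ne_zero (by simpa using hΨr) hBp0)
    (ENNReal.mul_ne_top ENNReal.ofReal_ne_top hBpt)).1 (h1.trans hNM)
  have h3 : V ^ (1 / p) ≤ ENNReal.ofReal (M * Ψ r / t) * B ^ (1 / p) := by
    rw [ENNReal.ofReal_div_of_pos ht, ENNReal.ofReal_mul hMpos.le, ENNReal.mul_div_right_comm.symm,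
      ENNReal.le_div_iff_mul_le (Or.inl (by simpa using ht)) (Or.inl ENNReal.ofReal_ne_top),
      mul_comm, mul_assoc]
    exact h2
  have h4 := ENNReal.rpow_le_rpow h3 hp.le
  rwa [ENNReal.mul_rpow_of_nonneg _ _ hp.le, ← ENNReal.rpow_mul, ← ENNReal.rpow_mul,
    one_div_mul_cancel hp.ne', ENNReal.rpow_one, ENNReal.rpow_one,
    ENNReal.ofReal_rpow_of_nonneg (by positivity) hp.le] at h4

/-- Kolmogorov's inequality on a ball: a weak `L^{p₁}` bound of size `τ` gives an `L^{p₂}` bound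
for `p₂ < p₁`. The layer-cake integral is split at height `τ`; below `τ` the trivial bound on the
superlevel sets is used, above `τ` the weak-type bound. -/
lemma lintegral_rpow_le_of_weak {n : ℕ} {p₁ p₂ : ℝ} (hp₂ : 1 ≤ p₂) (hp : p₂ < p₁)
    {f : Euc n → ℝ} (hf : Measurable f) {x : Euc n} {r τ : ℝ} (hτ : 0 < τ)
    (hV : ∀ t > 0, volume {y ∈ ball x r | t < |f y|} ≤
        ENNReal.ofReal ((τ / t) ^ p₁) * volume (ball x r)) :
    ∫⁻ y in ball x r, ENNReal.ofReal (|f y| ^ p₂) ≤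
      ENNReal.ofReal (p₂ * (1 + 1 / (p₁ - p₂)) * τ ^ p₂) * volume (ball x r) := by
  have hp₂0 : 0 < p₂ := by linarith
  have hd : 0 < p₁ - p₂ := by linarith
  rw [lintegral_rpow_eq_lintegral_meas_lt_mul _ (Eventually.of_forall fun y => abs_nonneg _)
    (by fun_prop) hp₂0]
  set B := volume (ball x r)
  have hmeas : ∀ t, (volume.restrict (ball x r)) {y | t < |f y|}
      = volume {y ∈ ball x r | t < |f y|} := by
    intro t
    rw [Measure.restrict_apply (measurableSet_lt measurable_const (by fun_prop))]
    congr 1; ext y; simp [and_comm]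
  have hsplit : Ioi (0 : ℝ) = Ioc 0 τ ∪ Ioi τ := (Ioc_union_Ioi_eq_Ioi hτ.le).symm
  have hlow : ∫⁻ t in Ioc 0 τ, (volume.restrict (ball x r)) {y | t < |f y|} *
      ENNReal.ofReal (t ^ (p₂ - 1)) ≤ ENNReal.ofReal (τ ^ p₂) * B := by
    calc _ ≤ ∫⁻ t in Ioc 0 τ, B * ENNReal.ofReal (τ ^ (p₂ - 1)) := by
          refine setLIntegral_mono measurable_const fun t ht => ?_
          gcongr
          · rw [hmeas]; exact measure_mono fun y hy => hy.1
          · exact ht.1.le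
          · exact ht.2
      _ = ENNReal.ofReal (τ ^ p₂) * B := by
          rw [setLIntegral_const, Real.volume_Ioc, mul_assoc, sub_zero,
            ← ENNReal.ofReal_mul (by positivity), mul_comm B]
          congr 2
          rw [Real.rpow_sub_one hτ.ne', div_mul_cancel₀ _ hτ.ne']
  have hhigh : ∫⁻ t in Ioi τ, (volume.restrict (ball x r)) {y | t < |f y|} *
      ENNReal.ofReal (t ^ (p₂ - 1)) ≤ ENNReal.ofReal (τ ^ p₂ * (1 / (p₁ - p₂))) * B := by
    have ha : p₂ - 1 - p₁ < -1 := by linarith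
    calc _ ≤ ∫⁻ t in Ioi τ, (ENNReal.ofReal (τ ^ p₁) * B) *
            ENNReal.ofReal (t ^ (p₂ - 1 - p₁)) := by
          refine setLIntegral_mono (by fun_prop) fun t ht => ?_
          have ht0 : 0 < t := hτ.trans ht
          rw [hmeas]
          refine (mul_le_mul_left (hV t ht0) _).trans (le_of_eq ?_)
          rw [mul_right_comm, mul_right_comm _ B, ← ENNReal.ofReal_mul (by positivity),
            ← ENNReal.ofReal_mul (by positivity)]
          congr 2
          rw [Real.div_rpow hτ.le ht0.le, Real.rpow_sub ht0 (p₂ - 1) p₁]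
          ring
      _ = ENNReal.ofReal (τ ^ p₁) * B * ENNReal.ofReal (∫ t in Ioi τ, t ^ (p₂ - 1 - p₁)) := by
          rw [lintegral_const_mul _ (by fun_prop), ofReal_integral_eq_lintegral_ofReal
            (integrableOn_Ioi_rpow_of_lt ha hτ)]
          filter_upwards [ae_restrict_mem measurableSet_Ioi] with t ht
          have : 0 < t := hτ.trans ht
          simp only [Pi.zero_apply]; positivity
      _ = _ := by
          rw [integral_Ioi_rpow_of_lt ha hτ, mul_right_comm, ← ENNReal.ofReal_mul (by positivity)]
          congr 2
          have e : p₂ - 1 - p₁ + 1 = -(p₁ - p₂) := by ring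
          rw [e, neg_div_neg_eq, mul_div_assoc', ← Real.rpow_add hτ]
          rw [show p₁ + -(p₁ - p₂) = p₂ by ring]; ring
  rw [hsplit]
  refine (mul_le_mul_right (lintegral_union_le _ _ _) _).trans ?_
  refine (mul_le_mul_right (add_le_add hlow hhigh) _).trans (le_of_eq ?_)
  rw [← add_mul, ← ENNReal.ofReal_add (by positivity) (by positivity), ← mul_assoc,
    ← ENNReal.ofReal_mul hp₂0.le]
  congr 2; ring

/-- Right-doubling lets the kernel `Ψ(d)/d^n` be averaged over radii `t ∈ (d/2, d)`. -/
lemma kernel_le_lintegral {n : ℕ} {Ψ : ℝ → ℝ} (hΨ : ∀ t > 0, 0 < Ψ t) {A : ℝ}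
    (hdbl : ∀ r s : ℝ, 0 < r → r ≤ s → s ≤ 2 * r → Ψ s / Ψ r ≤ A) {d : ℝ} (hd : 0 < d) :
    ENNReal.ofReal (Ψ d / d ^ (n : ℝ)) ≤
      ∫⁻ t in Ioo (d / 2) d, ENNReal.ofReal (2 * A * Ψ t / t ^ (n : ℝ) / t) := by
  have hΨd := hΨ d hd
  calc ENNReal.ofReal (Ψ d / d ^ (n : ℝ))
      = ∫⁻ t in Ioo (d / 2) d, ENNReal.ofReal (2 * Ψ d / d ^ (n : ℝ) / d) := by
        rw [setLIntegral_const, Real.volume_Ioo, ← ENNReal.ofReal_mul (by positivity)]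
        congr 1; field_simp; ring
    _ ≤ _ := by
        refine setLIntegral_mono' measurableSet_Ioo fun t ht => ENNReal.ofReal_le_ofReal ?_
        have ht0 : 0 < t := by linarith [ht.1]
        have h := hdbl t d ht0 ht.2.le (by linarith [ht.1])
        rw [div_le_iff₀ (hΨ t ht0)] at h
        have hle : t ≤ d := ht.2.le
        have : 0 ≤ A * Ψ t := hΨd.le.trans h
        rw [mul_assoc 2 A]
        gcongr

/-- The Stummel integral is controlled by a one-dimensional integral: the kernel is replaced by its
average over radii and Tonelli's theorem leaves the integral of `|f|^p` over `B(x, 2t)`. -/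
lemma stummel_lintegral_le {n : ℕ} (hn : 1 ≤ n) {p : ℝ} (hp : 1 ≤ p) {Ψ₁ Ψ₂ : ℝ → ℝ}
    (hΨ₁meas : Measurable Ψ₁) (hΨ₂meas : Measurable Ψ₂)
    (hΨ₁pos : ∀ t > 0, 0 < Ψ₁ t) (hΨ₂pos : ∀ t > 0, 0 < Ψ₂ t) {A₁ A₃ C : ℝ}
    (hA₁ : 0 < A₁) (hA₃ : 0 < A₃) (hC : 0 < C)
    (hΨ₁dbl : ∀ r s : ℝ, 0 < r → r ≤ s → s ≤ 2 * r → Ψ₁ s / Ψ₁ r ≤ A₁)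
    (hΨ₂dbl : ∀ r s : ℝ, 0 < r → r ≤ s → s ≤ 2 * r → Ψ₂ s / Ψ₂ r ≤ A₃)
    {f : Euc n → ℝ} (hf : Measurable f)
    (hball : ∀ (x : Euc n) (r : ℝ), 0 < r → ∫⁻ y in ball x r, ENNReal.ofReal (|f y| ^ p) ≤
      ENNReal.ofReal (C * Ψ₁ r ^ p) * volume (ball x r)) (x : Euc n) (r : ℝ) :
    ∫⁻ y in ball x r, ENNReal.ofReal (|f y| ^ p * Ψ₂ (dist x y) / dist x y ^ (n : ℝ)) ≤
      ENNReal.ofReal (2 * A₃ * C * A₁ ^ p * 2 ^ n) * volume (ball (0 : Euc n) 1) *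
        ∫⁻ t in Ioo 0 r, ENNReal.ofReal (Ψ₁ t ^ p * Ψ₂ t / t) := by
  set h : ℝ → ℝ≥0∞ := fun t => ENNReal.ofReal (2 * A₃ * Ψ₂ t / t ^ (n : ℝ) / t) with hh
  have hhm : Measurable h := by fun_prop
  set S : Set (Euc n × ℝ) := {z | dist x z.1 / 2 < z.2 ∧ z.2 < dist x z.1} with hS
  have hSm : MeasurableSet S :=
    (measurableSet_lt (f := fun z : Euc n × ℝ => dist x z.1 / 2) (g := fun z => z.2)
      (by fun_prop) (by fun_prop)).inter
      (measurableSet_lt (f := fun z : Euc n × ℝ => z.2) (g := fun z => dist x z.1)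
        (by fun_prop) (by fun_prop))
  set F : Euc n → ℝ → ℝ≥0∞ := fun y t =>
    S.indicator (fun z => ENNReal.ofReal (|f z.1| ^ p) * h z.2) (y, t) with hF
  have hFm : Measurable (Function.uncurry F) := by
    have : Measurable fun z : Euc n × ℝ => ENNReal.ofReal (|f z.1| ^ p) * h z.2 := by fun_prop
    exact this.indicator hSm
  calc _ ≤ ∫⁻ y in ball x r, ∫⁻ t in Ioo 0 r, F y t := by
        refine setLIntegral_mono' measurableSet_ball fun y hy => ?_
        rcases (dist_nonneg (x := x) (y := y)).eq_or_lt with h0 | hd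
        -- at `y = x` the kernel takes the junk value `Ψ₂ 0 / 0 = 0`
        · rw [← h0, Real.zero_rpow (by positivity)]; simp
        have hyr : dist x y < r := by rw [dist_comm]; exact hy
        rw [mul_div_assoc, ENNReal.ofReal_mul (by positivity)]
        refine (mul_le_mul_right (kernel_le_lintegral hΨ₂pos hΨ₂dbl hd) _).trans ?_
        rw [← lintegral_const_mul _ hhm, ← lintegral_indicator measurableSet_Ioo,
          ← lintegral_indicator measurableSet_Ioo]
        refine lintegral_mono fun t => ?_
        by_cases ht : t ∈ Ioo (dist x y / 2) (dist x y)
        · have h1 : t ∈ Ioo 0 r := ⟨by linarith [ht.1], ht.2.trans hyr⟩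
          have h2 : (y, t) ∈ S := ht
          rw [indicator_of_mem ht, indicator_of_mem h1]
          simp only [hF]; rw [indicator_of_mem h2]
        · rw [indicator_of_notMem ht]; exact zero_le
    _ = ∫⁻ t in Ioo 0 r, ∫⁻ y in ball x r, F y t :=
        lintegral_lintegral_swap hFm.aemeasurable
    _ ≤ ∫⁻ t in Ioo 0 r, ENNReal.ofReal (2 * A₃ * C * A₁ ^ p * 2 ^ n) *
          volume (ball (0 : Euc n) 1) * ENNReal.ofReal (Ψ₁ t ^ p * Ψ₂ t / t) := by
        refine setLIntegral_mono' measurableSet_Ioo fun t ht => ?_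
        have ht0 : 0 < t := ht.1
        have hP1 := hΨ₁pos t ht0
        have hP2 := hΨ₂pos t ht0
        have hP1' := hΨ₁pos (2 * t) (by positivity)
        calc _ ≤ ∫⁻ y, F y t := setLIntegral_le_lintegral _ _
          _ ≤ ∫⁻ y in ball x (2 * t), ENNReal.ofReal (|f y| ^ p) * h t := by
              rw [← lintegral_indicator measurableSet_ball]
              refine lintegral_mono fun y => ?_
              by_cases hy : (y, t) ∈ S
              · have hy' : y ∈ ball x (2 * t) := by
                  rw [mem_ball, dist_comm]; linarith [hy.1]
                simp only [hF]; rw [indicator_of_mem hy, indicator_of_mem hy']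
              · simp only [hF]; rw [indicator_of_notMem hy]; exact zero_le
          _ = (∫⁻ y in ball x (2 * t), ENNReal.ofReal (|f y| ^ p)) * h t :=
              lintegral_mul_const _ (by fun_prop)
          _ ≤ ENNReal.ofReal (C * (A₁ * Ψ₁ t) ^ p) *
                (ENNReal.ofReal ((2 * t) ^ n) * volume (ball (0 : Euc n) 1)) * h t := by
              have hb := hball x (2 * t) (by positivity)
              rw [Measure.addHaar_ball_of_pos volume x (by positivity : 0 < 2 * t),
                finrank_euclideanSpace_fin] at hb
              refine mul_le_mul_left (hb.trans ?_) _
              have := hΨ₁dbl t (2 * t) ht0 (by linarith) le_rfl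
              rw [div_le_iff₀ hP1] at this
              gcongr
          _ = _ := by
              rw [← mul_assoc, mul_right_comm, mul_right_comm _ (volume _),
                ← ENNReal.ofReal_mul (by positivity), ← ENNReal.ofReal_mul (by positivity),
                ← ENNReal.ofReal_mul (by positivity)]
              congr 2
              rw [Real.mul_rpow hA₁.le hP1.le, Real.rpow_natCast]
              field_simp
              rw [mul_pow, mul_comm]
    _ = _ := lintegral_const_mul _ (by fun_prop)

/-- Integrability of the weight near `0` propagates to `(0, r)` for every `r`, since doubling
bounds it on each interval `[R, 2R)`. -/
lemma weight_lintegral_lt_top {p : ℝ} (hp : 1 ≤ p) {Ψ₁ Ψ₂ : ℝ → ℝ}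
    (hΨ₁pos : ∀ t > 0, 0 < Ψ₁ t) (hΨ₂pos : ∀ t > 0, 0 < Ψ₂ t) {A₁ A₃ : ℝ}
    (hΨ₁dbl : ∀ r s : ℝ, 0 < r → r ≤ s → s ≤ 2 * r → Ψ₁ s / Ψ₁ r ≤ A₁)
    (hΨ₂dbl : ∀ r s : ℝ, 0 < r → r ≤ s → s ≤ 2 * r → Ψ₂ s / Ψ₂ r ≤ A₃)
    (hint : IntegrableOn (fun t => Ψ₁ t ^ p * Ψ₂ t / t) (Ioo (0 : ℝ) 1) volume) (r : ℝ) :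
    ∫⁻ t in Ioo 0 r, ENNReal.ofReal (Ψ₁ t ^ p * Ψ₂ t / t) < ⊤ := by
  have key : ∀ k : ℕ, ∫⁻ t in Ioo 0 ((2 : ℝ) ^ k),
      ENNReal.ofReal (Ψ₁ t ^ p * Ψ₂ t / t) < ⊤ := by
    intro k
    induction k with
    | zero => rw [pow_zero]; exact hint.lintegral_lt_top
    | succ k ih =>
      set R : ℝ := 2 ^ k with hR
      have hR0 : 0 < R := by positivity
      have h1 := hΨ₁pos R hR0
      have h2 := hΨ₂pos R hR0
      rw [pow_succ', ← Ioo_union_Ico_eq_Ioo hR0 (by linarith : R ≤ 2 * R)]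
      refine (lintegral_union_le _ _ _).trans_lt (ENNReal.add_lt_top.2 ⟨ih, ?_⟩)
      calc _ ≤ ∫⁻ t in Ico R (2 * R),
              ENNReal.ofReal ((A₁ * Ψ₁ R) ^ p * (A₃ * Ψ₂ R) / R) := by
            refine setLIntegral_mono' measurableSet_Ico fun t ht => ENNReal.ofReal_le_ofReal ?_
            have ht0 : 0 < t := hR0.trans_le ht.1
            have h1t := hΨ₁pos t ht0
            have h2t := hΨ₂pos t ht0
            have e1 := hΨ₁dbl R t hR0 ht.1 ht.2.le
            have e2 := hΨ₂dbl R t hR0 ht.1 ht.2.le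
            rw [div_le_iff₀ (by assumption)] at e1 e2
            have := h1t.le.trans e1
            have := h2t.le.trans e2
            have := ht.1
            gcongr
        _ < ⊤ := by
            rw [setLIntegral_const]
            exact ENNReal.mul_lt_top ENNReal.ofReal_lt_top (by simp)
  obtain ⟨k, hk⟩ := pow_unbounded_of_one_lt r (one_lt_two (α := ℝ))
  exact (lintegral_mono_set (Ioo_subset_Ioo_right hk.le)).trans_lt (key k)

/-- If `1 ≤ p₂ < p₁ < ∞`, `Ψ₁` is doubling, `Ψ₂` is right-doubling, and
`∫₀¹ Ψ₁(t)^{p₂} Ψ₂(t)/t dt < ∞`, then `wL^{p₁,Ψ₁}(ℝ^n) ⊆ S_{p₂,Ψ₂}(ℝ^n)`. -/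
theorem weak_morrey_subset_stummel (n : ℕ) (hn : 1 ≤ n) (p₁ p₂ : ℝ)
    (hp₂ : 1 ≤ p₂) (hp : p₂ < p₁)
    (Ψ₁ Ψ₂ : ℝ → ℝ) (hΨ₁meas : Measurable Ψ₁) (hΨ₂meas : Measurable Ψ₂)
    (hΨ₁pos : ∀ t > 0, 0 < Ψ₁ t) (hΨ₂pos : ∀ t > 0, 0 < Ψ₂ t)
    (A₁ : ℝ) (hA₁ : 0 < A₁)
    (hΨ₁dbl : ∀ r s : ℝ, 0 < r → r ≤ s → s ≤ 2 * r →
      A₁⁻¹ ≤ Ψ₁ s / Ψ₁ r ∧ Ψ₁ s / Ψ₁ r ≤ A₁)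
    (A₃ : ℝ) (hA₃ : 0 < A₃)
    (hΨ₂dbl : ∀ r s : ℝ, 0 < r → r ≤ s → s ≤ 2 * r → Ψ₂ s / Ψ₂ r ≤ A₃)
    (hint : IntegrableOn (fun t => Ψ₁ t ^ p₂ * Ψ₂ t / t) (Ioo (0 : ℝ) 1) volume) :
    ∀ f : Euc n → ℝ, MemWeakMorrey n p₁ Ψ₁ f → MemStummel n p₂ Ψ₂ f := by
  intro f hf
  obtain ⟨hfm, hfN⟩ := hf
  have hp₂0 : 0 < p₂ := by linarith
  have hd : 0 < p₁ - p₂ := by linarith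
  obtain ⟨M, hM, hV⟩ := measure_superlevel_le (by linarith) hΨ₁pos hfN
  set C : ℝ := p₂ * (1 + 1 / (p₁ - p₂)) * M ^ p₂ with hCdef
  have hC : 0 < C := by positivity
  have hball : ∀ (x : Euc n) (r : ℝ), 0 < r → ∫⁻ y in ball x r, ENNReal.ofReal (|f y| ^ p₂) ≤
      ENNReal.ofReal (C * Ψ₁ r ^ p₂) * volume (ball x r) := by
    intro x r hr
    have hΨr := hΨ₁pos r hr
    refine (lintegral_rpow_le_of_weak hp₂ hp hfm (mul_pos hM hΨr)
      fun t ht => hV x r t hr ht).trans (le_of_eq ?_)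
    rw [Real.mul_rpow hM.le hΨr.le, ← mul_assoc]
  set K : ℝ≥0∞ := ENNReal.ofReal (2 * A₃ * C * A₁ ^ p₂ * 2 ^ n) * volume (ball (0 : Euc n) 1)
    with hK
  have hKt : K ≠ ⊤ := ENNReal.mul_ne_top ENNReal.ofReal_ne_top measure_ball_lt_top.ne
  set G : ℝ → ℝ≥0∞ := fun r => ∫⁻ t in Ioo 0 r, ENNReal.ofReal (Ψ₁ t ^ p₂ * Ψ₂ t / t) with hG
  have hGt : ∀ r, G r < ⊤ := weight_lintegral_lt_top hp₂ hΨ₁pos hΨ₂pos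
    (fun r s h1 h2 h3 => (hΨ₁dbl r s h1 h2 h3).2) hΨ₂dbl hint
  have hle : ∀ r, stummelMod n p₂ Ψ₂ f r ≤ (K * G r) ^ (1 / p₂) := fun r =>
    iSup_le fun x => ENNReal.rpow_le_rpow (stummel_lintegral_le hn hp₂ hΨ₁meas hΨ₂meas hΨ₁pos
      hΨ₂pos hA₁ hA₃ hC (fun r s h1 h2 h3 => (hΨ₁dbl r s h1 h2 h3).2) hΨ₂dbl hfm hball x r)
      (by positivity)
  refine ⟨fun x => ⟨ball x 1, ball_mem_nhds x one_pos, ?_, ?_⟩, fun r _ => ?_, ?_⟩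
  · exact (by fun_prop : Measurable fun y => |f y| ^ p₂).aestronglyMeasurable
  · rw [hasFiniteIntegral_iff_ofReal (Eventually.of_forall fun y => by positivity)]
    exact (hball x 1 one_pos).trans_lt
      (ENNReal.mul_lt_top ENNReal.ofReal_lt_top measure_ball_lt_top)
  · exact (hle r).trans_lt (ENNReal.rpow_lt_top_of_nonneg (by positivity)
      (ENNReal.mul_ne_top hKt (hGt r).ne))
  · have hG0 : Tendsto G (nhdsWithin 0 (Ioi 0)) (nhds 0) := by
      have hvol : Tendsto (fun r : ℝ => (volume.restrict (Ioo (0 : ℝ) 1)) (Ioo 0 r))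
          (nhdsWithin 0 (Ioi 0)) (nhds 0) := by
        have h1 : Tendsto (fun r : ℝ => ENNReal.ofReal r) (nhdsWithin 0 (Ioi 0)) (nhds 0) := by
          have := (ENNReal.continuous_ofReal.tendsto 0).mono_left
            (nhdsWithin_le_nhds (s := Ioi (0 : ℝ)))
          simpa using this
        refine tendsto_of_tendsto_of_tendsto_of_le_of_le tendsto_const_nhds h1
          (fun _ => zero_le) fun r => (Measure.restrict_apply_le _ _).trans ?_
        simp
      refine (tendsto_setLIntegral_zero (hGt 1).ne hvol).congr' ?_
      filter_upwards [Ioo_mem_nhdsGT (one_pos (α := ℝ))] with r hr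
      rw [Measure.restrict_restrict measurableSet_Ioo,
        inter_eq_left.2 (Ioo_subset_Ioo_right hr.2.le)]
    have hlim : Tendsto (fun r => (K * G r) ^ (1 / p₂)) (nhdsWithin 0 (Ioi 0)) (nhds 0) := by
      have h1 := ENNReal.Tendsto.const_mul (a := K) hG0 (Or.inr hKt)
      have h2 := (ENNReal.continuous_rpow_const (y := 1 / p₂)).tendsto (K * 0) |>.comp h1
      rw [mul_zero, ENNReal.zero_rpow_of_pos (by positivity)] at h2
      exact h2
    exact tendsto_of_tendsto_of_tendsto_of_le_of_le tendsto_const_nhds hlim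
      (fun _ => zero_le) hle
end

section
/- Let n ≥ 1 and 1 ≤ p₂ < p₁ < ∞. If 0 ≤ λ < n and (n − λ) p₂ / p₁ < α < n, then the weak Morrey space wL^{p₁,λ}(ℝ^n) is contained in the Stummel class S_{p₂,α}(ℝ^n). -/
/-!
The proof has three steps. The weak Morrey bound says that
`|{y ∈ B(x,r) : |f y| > t}| ≤ K r^λ t^(-p₁)`, uniformly in `x` (`weak_morrey_distribution_bound`).

Integrating this over levels, with the trivial bound `|B(x,r)| = ω r^n` below the balancing level
`T = r^((λ-n)/p₁)`, gives the strong Morrey bound `∫_{B(x,r)} |f|^p₂ ≤ C r^β` with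
`β = n - (n-λ) p₂ / p₁` (`morrey_bound_of_weak`). The condition `p₂ < p₁` is what makes the tail
`∫_T^∞ t^(p₂-1-p₁) dt` converge.

Finally `|x-y|^(-(n-α))` is dominated on `B(x,r)` by the sum over `k` of
`(2^(-k-1) r)^(-(n-α))` times the indicator of `B(x, 2^(-k) r)`, so the Stummel integral is at most
a geometric series with ratio `2^(-δ)`, `δ = β - (n-α)`, which is positive exactly when
`(n-λ) p₂ / p₁ < α` (`stummel_integral_bound`). The resulting bound `C' r^δ` is uniform in `x`,
finite, and tends to `0` with `r`.
-/

open MeasureTheory Metric Filter Set ENNReal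

/-- Chebyshev-type form of the weak Morrey condition, with real constants. -/
lemma weak_morrey_distribution_bound {n : ℕ} {p lam : ℝ} (hp : 0 < p) {f : Euc n → ℝ}
    (hf : MemWeakMorreyC n p lam f) :
    ∃ K : ℝ, 0 ≤ K ∧ ∀ (x : Euc n) (r t : ℝ), 0 < r → 0 < t →
      volume {y ∈ ball x r | t < |f y|} ≤ ENNReal.ofReal (K * r ^ lam * t ^ (-p)) := by
  refine ⟨(weakMorreyNormC n p lam f).toReal ^ p, by positivity, fun x r t hr ht => ?_⟩
  set m := (weakMorreyNormC n p lam f).toReal with hm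
  have hm0 : 0 ≤ m := ENNReal.toReal_nonneg
  have hfin : volume {y ∈ ball x r | t < |f y|} ≠ ⊤ :=
    ((measure_mono (fun y hy => hy.1)).trans_lt (measure_ball_lt_top (x := x) (r := r))).ne
  have h1 : ENNReal.ofReal (r ^ (-(lam / p))) * ENNReal.ofReal t *
      (volume {y ∈ ball x r | t < |f y|}) ^ (1 / p) ≤ ENNReal.ofReal m := by
    rw [hm, ENNReal.ofReal_toReal hf.2.ne]
    exact le_iSup₂_of_le x r (le_iSup₂_of_le hr t (le_iSup_of_le ht le_rfl))
  rw [← ENNReal.ofReal_toReal hfin] at h1 ⊢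
  set v := (volume {y ∈ ball x r | t < |f y|}).toReal
  have hv : 0 ≤ v := ENNReal.toReal_nonneg
  rw [ENNReal.ofReal_rpow_of_nonneg hv (by positivity), ← ENNReal.ofReal_mul (by positivity),
    ← ENNReal.ofReal_mul (by positivity), ENNReal.ofReal_le_ofReal_iff hm0] at h1
  apply ENNReal.ofReal_le_ofReal
  have h2 : v ^ (1 / p) ≤ m * r ^ (lam / p) * t⁻¹ := by
    rw [Real.rpow_neg hr.le] at h1
    have : 0 < r ^ (lam / p) := by positivity
    calc v ^ (1 / p) = ((r ^ (lam / p))⁻¹ * t * v ^ (1 / p)) * (r ^ (lam / p) * t⁻¹) := by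
          field_simp
      _ ≤ m * (r ^ (lam / p) * t⁻¹) := by gcongr
      _ = _ := by ring
  calc v = (v ^ (1 / p)) ^ p := by
        rw [← Real.rpow_mul hv, one_div_mul_cancel hp.ne', Real.rpow_one]
    _ ≤ (m * r ^ (lam / p) * t⁻¹) ^ p := by gcongr
    _ = m ^ p * r ^ lam * t ^ (-p) := by
        rw [Real.mul_rpow (by positivity) (by positivity), Real.mul_rpow hm0 (by positivity),
          ← Real.rpow_mul hr.le, div_mul_cancel₀ _ hp.ne', Real.inv_rpow ht.le,
          Real.rpow_neg ht.le]

/-- A distribution bound of order `p` with mass `a`, on a measure of total mass at most `b`,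
controls the `q`-th moment for `q < p`; the level integral is split at a free height `T`. -/
lemma lintegral_rpow_le_of_distribution {X : Type*} [MeasurableSpace X] (μ : Measure X)
    {g : X → ℝ} (hg : Measurable g) {p q a b T : ℝ} (hq : 0 < q) (hpq : q < p) (ha : 0 ≤ a)
    (hb : 0 ≤ b) (hT : 0 < T) (hμ : μ univ ≤ ENNReal.ofReal b)
    (h : ∀ t, 0 < t → μ {y | t < |g y|} ≤ ENNReal.ofReal (a * t ^ (-p))) :
    ∫⁻ y, ENNReal.ofReal (|g y| ^ q) ∂μ ≤
      ENNReal.ofReal (b * T ^ q + q / (p - q) * (a * T ^ (q - p))) := by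
  have hpq' : 0 < p - q := sub_pos.2 hpq
  rw [lintegral_rpow_eq_lintegral_meas_lt_mul μ (Eventually.of_forall fun y => abs_nonneg (g y))
    (by fun_prop) hq, ← Ioc_union_Ioi_eq_Ioi hT.le,
    lintegral_union measurableSet_Ioi (Set.Ioc_disjoint_Ioi le_rfl)]
  have low : ∫⁻ t in Ioc 0 T, μ {y | t < |g y|} * ENNReal.ofReal (t ^ (q - 1)) ≤
      ENNReal.ofReal (b * (T ^ q / q)) := by
    calc _ ≤ ∫⁻ t in Ioc 0 T, ENNReal.ofReal b * ENNReal.ofReal (t ^ (q - 1)) := by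
          gcongr with t
          exact (measure_mono (subset_univ _)).trans hμ
      _ = ENNReal.ofReal b * ENNReal.ofReal (∫ t in Ioc 0 T, t ^ (q - 1)) := by
          rw [lintegral_const_mul' _ _ ENNReal.ofReal_ne_top, ofReal_integral_eq_lintegral_ofReal]
          · exact (intervalIntegrable_iff_integrableOn_Ioc_of_le hT.le).1
              (intervalIntegral.intervalIntegrable_rpow' (by linarith))
          · filter_upwards [ae_restrict_mem measurableSet_Ioc] with t ht
            exact Real.rpow_nonneg ht.1.le _
      _ = _ := by
          rw [← intervalIntegral.integral_of_le hT.le, integral_rpow (Or.inl (by linarith)),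
            sub_add_cancel, Real.zero_rpow hq.ne', sub_zero, ENNReal.ofReal_mul hb]
  have high : ∫⁻ t in Ioi T, μ {y | t < |g y|} * ENNReal.ofReal (t ^ (q - 1)) ≤
      ENNReal.ofReal (a * (T ^ (q - p) / (p - q))) := by
    calc _ ≤ ∫⁻ t in Ioi T, ENNReal.ofReal a * ENNReal.ofReal (t ^ (q - 1 - p)) := by
          apply setLIntegral_mono' measurableSet_Ioi
          intro t ht
          have ht0 : 0 < t := hT.trans ht
          calc _ ≤ ENNReal.ofReal (a * t ^ (-p)) * ENNReal.ofReal (t ^ (q - 1)) := by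
                gcongr
                exact h t ht0
            _ = _ := by
                rw [← ENNReal.ofReal_mul (by positivity), ← ENNReal.ofReal_mul ha, mul_assoc,
                  ← Real.rpow_add ht0]
                ring_nf
      _ = ENNReal.ofReal a * ENNReal.ofReal (∫ t in Ioi T, t ^ (q - 1 - p)) := by
          rw [lintegral_const_mul' _ _ ENNReal.ofReal_ne_top, ofReal_integral_eq_lintegral_ofReal]
          · exact integrableOn_Ioi_rpow_of_lt (by linarith) hT
          · filter_upwards [ae_restrict_mem measurableSet_Ioi] with t ht
            exact Real.rpow_nonneg (hT.trans ht).le _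
      _ = _ := by
          rw [integral_Ioi_rpow_of_lt (by linarith) hT, ENNReal.ofReal_mul ha,
            show q - 1 - p + 1 = -(p - q) by ring, neg_div_neg_eq, neg_sub]
  calc _ ≤ ENNReal.ofReal q * (ENNReal.ofReal (b * (T ^ q / q)) +
        ENNReal.ofReal (a * (T ^ (q - p) / (p - q)))) := by gcongr
    _ = _ := by
      rw [← ENNReal.ofReal_add (by positivity) (by positivity), ← ENNReal.ofReal_mul hq.le]
      congr 1
      field_simp

/-- Weak Morrey functions of order `p₁` satisfy a strong Morrey bound of every order `p₂ < p₁`. -/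
lemma morrey_bound_of_weak {n : ℕ} (hn : 1 ≤ n) {p₁ p₂ lam : ℝ} (hp₂ : 0 < p₂) (hp : p₂ < p₁)
    {f : Euc n → ℝ} (hf : MemWeakMorreyC n p₁ lam f) :
    ∃ C : ℝ, 0 ≤ C ∧ ∀ (x : Euc n) (r : ℝ), 0 < r →
      ∫⁻ y in ball x r, ENNReal.ofReal (|f y| ^ p₂) ≤
        ENNReal.ofReal (C * r ^ ((n : ℝ) - ((n : ℝ) - lam) * p₂ / p₁)) := by
  have hp₁ : 0 < p₁ := hp₂.trans hp
  have hpp : 0 < p₁ - p₂ := sub_pos.2 hp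
  obtain ⟨K, hK, hKb⟩ := weak_morrey_distribution_bound hp₁ hf
  set ω := (volume (ball (0 : Euc n) 1)).toReal with hω
  have hω0 : 0 ≤ ω := ENNReal.toReal_nonneg
  refine ⟨ω + p₂ / (p₁ - p₂) * K, by positivity, fun x r hr => ?_⟩
  have : Nonempty (Fin n) := ⟨⟨0, hn⟩⟩
  have hvol : volume (ball x r) = ENNReal.ofReal (ω * r ^ (n : ℝ)) := by
    rw [Measure.addHaar_ball volume x hr.le, finrank_euclideanSpace_fin,
      ENNReal.ofReal_mul hω0, hω, ENNReal.ofReal_toReal measure_ball_lt_top.ne, mul_comm,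
      Real.rpow_natCast]
  -- At height `r ^ ((lam - n) / p₁)` both parts of the level integral have the same order in `r`.
  have key := lintegral_rpow_le_of_distribution (volume.restrict (ball x r)) hf.1
    (p := p₁) (q := p₂) (a := K * r ^ lam) (b := ω * r ^ (n : ℝ))
    (T := r ^ ((lam - n) / p₁)) hp₂ hp (by positivity) (by positivity) (by positivity)
    (by rw [Measure.restrict_apply_univ, hvol])
    (fun t ht => by
      rw [Measure.restrict_apply (measurableSet_lt measurable_const (by have := hf.1; fun_prop))]
      convert hKb x r t hr ht using 2
      ext y
      simp [and_comm])
  refine key.trans (le_of_eq ?_)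
  congr 1
  rw [← Real.rpow_mul hr.le, ← Real.rpow_mul hr.le, mul_assoc, mul_assoc K, ← Real.rpow_add hr,
    ← Real.rpow_add hr]
  have e1 : (n : ℝ) + (lam - n) / p₁ * p₂ = n - (n - lam) * p₂ / p₁ := by ring
  have e2 : lam + (lam - n) / p₁ * (p₂ - p₁) = n - (n - lam) * p₂ / p₁ := by
    field_simp
    ring
  rw [e1, e2]
  ring

/-- Dyadic domination of the singular weight: a bound `C r ^ β` for the integrals over balls,
with `β > s > 0`, gives a bound of order `r ^ (β - s)` for the integrals against
`dist x y ^ (-s)`. -/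
lemma stummel_integral_bound {n : ℕ} {s β C : ℝ} (hs : 0 < s) (hβ : s < β) (hC : 0 ≤ C)
    {g : Euc n → ℝ} (hg : Measurable g) (hg0 : ∀ y, 0 ≤ g y)
    (h : ∀ (x : Euc n) (r : ℝ), 0 < r →
      ∫⁻ y in ball x r, ENNReal.ofReal (g y) ≤ ENNReal.ofReal (C * r ^ β)) :
    ∃ C' : ℝ, 0 ≤ C' ∧ ∀ (x : Euc n) (r : ℝ), 0 < r →
      ∫⁻ y in ball x r, ENNReal.ofReal (g y / dist x y ^ s) ≤
        ENNReal.ofReal (C' * r ^ (β - s)) := by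
  set ρ : ℝ := (1 / 2 : ℝ) ^ (β - s) with hρ
  have hρ0 : 0 ≤ ρ := by positivity
  have hρ1 : ρ < 1 := Real.rpow_lt_one (by norm_num) (by norm_num) (sub_pos.2 hβ)
  refine ⟨C * 2 ^ s * (1 - ρ)⁻¹, by have := sub_pos.2 hρ1; positivity, fun x r hr => ?_⟩
  let R : ℕ → ℝ := fun k => (1 / 2 : ℝ) ^ k * r
  have hR : ∀ k, 0 < R k := fun k => by positivity
  let W : ℕ → ℝ := fun k => (R k / 2) ^ (-s)
  have hW : ∀ k, 0 ≤ W k := fun k => by have := hR k; positivity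
  have pointwise : ∀ y ∈ ball x r, ENNReal.ofReal (g y / dist x y ^ s) ≤
      ∑' k, (ball x (R k)).indicator (fun z => ENNReal.ofReal (W k) * ENNReal.ofReal (g z)) y := by
    intro y hy
    rcases eq_or_ne y x with rfl | hne
    · -- At the centre the weight takes the junk value `g y / 0 = 0`.
      simp [Real.zero_rpow hs.ne']
    have hd : 0 < dist x y := dist_pos.2 hne.symm
    have hdr : dist x y < r := by rwa [dist_comm, ← mem_ball]
    -- The last dyadic radius exceeding the distance selects a term of the sum that suffices.
    obtain ⟨k, hk1, hk2⟩ : ∃ k, R k / 2 ≤ dist x y ∧ dist x y < R k := by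
      have hex : ∃ m, R m ≤ dist x y := by
        obtain ⟨m, hm⟩ := exists_pow_lt_of_lt_one (div_pos hd hr) (by norm_num : (1 / 2 : ℝ) < 1)
        exact ⟨m, ((lt_div_iff₀ hr).1 hm).le⟩
      classical
      have hspec := Nat.find_spec hex
      obtain ⟨k, hk⟩ : ∃ k, Nat.find hex = k + 1 := by
        refine Nat.exists_eq_succ_of_ne_zero fun h0 => ?_
        rw [h0] at hspec
        simp only [R, pow_zero, one_mul] at hspec
        linarith
      refine ⟨k, ?_, not_le.1 (Nat.find_min hex (by omega))⟩
      rw [hk] at hspec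
      convert hspec using 1
      simp only [R, pow_succ]
      ring
    refine le_trans ?_ (ENNReal.le_tsum k)
    rw [indicator_of_mem (by rwa [mem_ball, dist_comm]), ← ENNReal.ofReal_mul (hW k)]
    apply ENNReal.ofReal_le_ofReal
    have hRk : 0 < R k / 2 := half_pos (hR k)
    rw [div_eq_mul_inv, mul_comm, ← Real.rpow_neg hd.le]
    exact mul_le_mul_of_nonneg_right
      (Real.rpow_le_rpow_of_nonpos hRk hk1 (by linarith)) (hg0 y)
  calc ∫⁻ y in ball x r, ENNReal.ofReal (g y / dist x y ^ s)
      ≤ ∫⁻ y in ball x r, ∑' k, (ball x (R k)).indicator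
          (fun z => ENNReal.ofReal (W k) * ENNReal.ofReal (g z)) y :=
        setLIntegral_mono' measurableSet_ball pointwise
    _ ≤ ∫⁻ y, ∑' k, (ball x (R k)).indicator
          (fun z => ENNReal.ofReal (W k) * ENNReal.ofReal (g z)) y := setLIntegral_le_lintegral _ _
    _ = ∑' k, ENNReal.ofReal (W k) * ∫⁻ y in ball x (R k), ENNReal.ofReal (g y) := by
        rw [lintegral_tsum fun k => (Measurable.indicator (by fun_prop)
          measurableSet_ball).aemeasurable]
        congr 1 with k
        rw [lintegral_indicator measurableSet_ball,
          lintegral_const_mul' _ _ ENNReal.ofReal_ne_top]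
    _ ≤ ∑' k, ENNReal.ofReal (C * 2 ^ s * r ^ (β - s) * ρ ^ k) := by
        gcongr with k
        refine (mul_le_mul_right (h x (R k) (hR k)) _).trans (le_of_eq ?_)
        rw [← ENNReal.ofReal_mul (hW k)]
        congr 1
        have e1 : W k = 2 ^ s * R k ^ (-s) := by
          simp only [W]
          rw [Real.div_rpow (hR k).le (by norm_num), Real.rpow_neg (by norm_num : (0:ℝ) ≤ 2),
            div_inv_eq_mul, mul_comm]
        have e2 : R k ^ (-s) * R k ^ β = r ^ (β - s) * ρ ^ k := by
          rw [← Real.rpow_add (hR k), show -s + β = β - s by ring,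
            Real.mul_rpow (by positivity) hr.le, hρ, ← Real.rpow_natCast, ← Real.rpow_natCast,
            ← Real.rpow_mul (by norm_num), ← Real.rpow_mul (by norm_num), mul_comm,
            mul_comm (k : ℝ)]
        rw [e1]
        linear_combination C * 2 ^ s * e2
    _ = ENNReal.ofReal (C * 2 ^ s * (1 - ρ)⁻¹ * r ^ (β - s)) := by
        rw [← ENNReal.ofReal_tsum_of_nonneg (fun k => by positivity)
          ((summable_geometric_of_lt_one hρ0 hρ1).mul_left _), tsum_mul_left,
          tsum_geometric_of_lt_one hρ0 hρ1]
        ring_nf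

/-- For `1 ≤ p₂ < p₁ < ∞`, `0 ≤ λ < n` and `(n−λ)p₂/p₁ < α < n`,
`wL^{p₁,λ}(ℝ^n) ⊆ S_{p₂,α}(ℝ^n)`. -/
theorem weak_morrey_subset_stummel_classical (n : ℕ) (hn : 1 ≤ n) (p₁ p₂ lam α : ℝ)
    (hp₂ : 1 ≤ p₂) (hp : p₂ < p₁) (hlam₀ : 0 ≤ lam) (hlam₁ : lam < n)
    (hα₁ : ((n : ℝ) - lam) * p₂ / p₁ < α) (hα₂ : α < n) :
    ∀ f : Euc n → ℝ, MemWeakMorreyC n p₁ lam f → MemStummelA n p₂ α f := by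
  intro f hf
  have hp₂0 : 0 < p₂ := by linarith
  have hfm : Measurable f := hf.1
  obtain ⟨C, hC, hCb⟩ := morrey_bound_of_weak hn hp₂0 hp hf
  obtain ⟨C', hC', hCb'⟩ := stummel_integral_bound (s := (n : ℝ) - α)
    (g := fun y => |f y| ^ p₂) (by linarith) (by linarith) hC (by fun_prop)
    (fun y => by positivity) hCb
  set δ : ℝ := (n : ℝ) - ((n : ℝ) - lam) * p₂ / p₁ - ((n : ℝ) - α) with hδ
  have hδ0 : 0 < δ := by linarith
  have hmod : ∀ r > 0, stummelModA n p₂ α f r ≤ ENNReal.ofReal (C' * r ^ δ) ^ (1 / p₂) :=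
    fun r hr => iSup_le fun x => ENNReal.rpow_le_rpow (hCb' x r hr) (by positivity)
  refine ⟨fun x => ⟨ball x 1, ball_mem_nhds x one_pos, ?_⟩,
    fun r hr => (hmod r hr).trans_lt
      (ENNReal.rpow_lt_top_of_nonneg (by positivity) ENNReal.ofReal_ne_top), ?_⟩
  · refine ⟨(by fun_prop : Measurable fun y => |f y| ^ p₂).aestronglyMeasurable, ?_⟩
    rw [hasFiniteIntegral_iff_ofReal (Eventually.of_forall fun y => by positivity)]
    exact (hCb x 1 one_pos).trans_lt ENNReal.ofReal_lt_top
  · have hlim : Tendsto (fun r : ℝ => ENNReal.ofReal (C' * r ^ δ) ^ (1 / p₂))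
        (nhdsWithin 0 (Ioi 0)) (nhds 0) := by
      have hcont : Continuous fun r : ℝ => ENNReal.ofReal (C' * r ^ δ) ^ (1 / p₂) :=
        ENNReal.continuous_rpow_const.comp (ENNReal.continuous_ofReal.comp
          (continuous_const.mul (Real.continuous_rpow_const hδ0.le)))
      have h0 := (hcont.tendsto 0).mono_left (nhdsWithin_le_nhds (s := Ioi 0))
      simpa [Real.zero_rpow hδ0.ne', hp₂0] using h0
    refine tendsto_of_tendsto_of_tendsto_of_le_of_le' tendsto_const_nhds hlim
      (Eventually.of_forall fun r => zero_le) ?_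
    filter_upwards [self_mem_nhdsWithin] with r hr
    exact hmod r hr
end
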